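/- Let G be a convex triangular grid and let h₀ : B(G) → ℤ be an integer-valued function on the boundary edges of G. If h₀ is extendable to a concave cocirculation in G, then h₀ is extendable to an integer concave cocirculation in G. -/

import Mathlib

open scoped BigOperators

attribute [local instance] Classical.propDecidable

noncomputable section

/-- Points of the plane. -/
abbrev Pt : Type := ℝ × ℝ

/-- Directed edges: ordered pairs of points. -/
abbrev Ed : Type := Pt × Pt

/-- The three generating vectors ξ₁ = (1,0), ξ₂ = (−1/2, √3/2), ξ₃ = (−1/2, −√3/2). -/
noncomputable def xiv : Fin 3 → Pt
  | 0 => ((1 : ℝ), (0 : ℝ))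
  | 1 => (-(1 / 2 : ℝ), Real.sqrt 3 / 2)
  | 2 => (-(1 / 2 : ℝ), -(Real.sqrt 3 / 2))

/-- A little (lattice) triangle of the triangular grid, given by its base point and
its orientation (`up = true` for an upward triangle). -/
structure GridTriangle : Type where
  base : Pt
  up : Bool

noncomputable def GridTriangle.v0 (T : GridTriangle) : Pt := T.base
noncomputable def GridTriangle.v1 (T : GridTriangle) : Pt := T.base + xiv 0
noncomputable def GridTriangle.v2 (T : GridTriangle) : Pt :=
  if T.up then T.base + xiv 0 + xiv 1 else T.base + xiv 0 + xiv 2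

/-- The three directed edges of the 3-circuit surrounding a little triangle;
each has direction ξ₁, ξ₂ or ξ₃. -/
noncomputable def GridTriangle.e0 (T : GridTriangle) : Ed := (T.v0, T.v1)
noncomputable def GridTriangle.e1 (T : GridTriangle) : Ed := (T.v1, T.v2)
noncomputable def GridTriangle.e2 (T : GridTriangle) : Ed := (T.v2, T.v0)

noncomputable def GridTriangle.edgeFinset (T : GridTriangle) : Finset Ed := {T.e0, T.e1, T.e2}

/-- The closed region spanned by a little triangle. -/
noncomputable def GridTriangle.region (T : GridTriangle) : Set Pt :=
  convexHull ℝ {T.v0, T.v1, T.v2}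

/-- Vectors of the lattice generated by ξ₁ and ξ₂. -/
def IsLatticeVec (p : Pt) : Prop := ∃ m n : ℤ, p = (m : ℝ) • xiv 0 + (n : ℝ) • xiv 1

/-- A convex triangular grid: a finite nonempty set of little triangles of a common
translate of the triangular lattice whose union is a convex polygon.  (Its vertices,
edges, bounded faces and boundary are then those of the planar digraph formed by the
edges of the little triangles.) -/
structure ConvexGrid : Type where
  tris : Finset GridTriangle
  nonempty : tris.Nonempty
  aligned : ∀ T ∈ tris, ∀ T' ∈ tris, IsLatticeVec (T.base - T'.base)
  convex : Convex ℝ (⋃ T ∈ tris, GridTriangle.region T)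

/-- The region R(G) spanned by the grid. -/
noncomputable def ConvexGrid.region (G : ConvexGrid) : Set Pt :=
  ⋃ T ∈ G.tris, GridTriangle.region T

/-- The (directed) edge set E(G) of the grid. -/
noncomputable def ConvexGrid.edges (G : ConvexGrid) : Finset Ed :=
  G.tris.biUnion GridTriangle.edgeFinset

/-- The boundary edges B(G): edges lying in exactly one little triangle. -/
noncomputable def ConvexGrid.boundary (G : ConvexGrid) : Finset Ed :=
  G.edges.filter fun e => (G.tris.filter fun T => e ∈ T.edgeFinset).card = 1

/-- A cocirculation: `h(e)+h(e')+h(e'')=0` around each little triangle. -/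
def IsCocirculation (G : ConvexGrid) (h : Ed → ℝ) : Prop :=
  ∀ T ∈ G.tris, h T.e0 + h T.e1 + h T.e2 = 0

/-- `g` coincides with an affine function on `S`. -/
def AffineOn (g : Pt → ℝ) (S : Set Pt) : Prop :=
  ∃ φ : Pt →ᵃ[ℝ] ℝ, ∀ x ∈ S, g x = φ x

/-- A concave cocirculation: a cocirculation induced by a concave function on R(G)
which is affinely linear within each little triangle. -/
def IsConcaveCocirculation (G : ConvexGrid) (h : Ed → ℝ) : Prop :=
  IsCocirculation G h ∧
  ∃ g : Pt → ℝ, ConcaveOn ℝ G.region g ∧ (∀ T ∈ G.tris, AffineOn g T.region) ∧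
    ∀ e ∈ G.edges, h e = g e.2 - g e.1

/-- The polyhedron C(G,h₀) of concave cocirculations agreeing with h₀ on F. -/
def CC (G : ConvexGrid) (F : Set Ed) (h₀ : Ed → ℝ) : Set (Ed → ℝ) :=
  {h | IsConcaveCocirculation G h ∧ ∀ e ∈ F, h e = h₀ e}

/-- `h` is a vertex (extreme point) of the set `C` of cocirculations, regarded as a
subset of ℝ^{E(G)} (only the coordinates on the edges of `G` matter). -/
def IsVertexOf (G : ConvexGrid) (C : Set (Ed → ℝ)) (h : Ed → ℝ) : Prop :=
  h ∈ C ∧ ∀ h₁ ∈ C, ∀ h₂ ∈ C,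
    (∀ e ∈ G.edges, h e = (h₁ e + h₂ e) / 2) → ∀ e ∈ G.edges, h₁ e = h₂ e

/-!
A concave cocirculation is the discrete gradient of a function on the lattice vertices that is
concave across every rhombus formed by two adjacent little triangles (a *hive*). When its boundary
values are integral, subtracting a constant makes the potential integral at the boundary vertices,
and a steep concave cone extends it to a hive on the whole lattice which is integral outside the
finitely many interior vertices.

Among the hives with these prescribed values take one that maximizes the sum of the values at the
interior vertices and is extreme among the maximizers. After a small strictly concave perturbation
of the data it bends along every segment of lattice points, since otherwise it could be raised
there; hence its flat rhombi share no triangle. Extremality says that they are rigid: the only real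
perturbation supported on the interior and affine across each flat rhombus is zero. A nonzero
perturbation with values in `ℝ/ℤ` becomes, after merging the two triangles of every flat rhombus
into a parallelogram, a circulation on a finite graph. No vertex has degree one in the support of a
circulation, so there are at least as many edges as vertices, and counting dimensions yields a
nonzero real circulation on the same support, which contradicts rigidity. So the flat rhombi are
also rigid over `ℝ/ℤ`, and a hive rigid in this sense equals zero modulo 1. The integral concave
function on the region is the minimum of the affine interpolants over the little triangles.
-/

section HexLattice

/-- The norm on `ℤ × ℤ` whose unit sphere consists of the six edge vectors of the triangular
lattice; coordinates refer to a basis `ξ, η` of the lattice with a 60° angle. -/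
def hexNorm (v : ℤ × ℤ) : ℤ := max (max |v.1| |v.2|) |v.1 + v.2|

/-- The rotation of the triangular lattice by 60°, with respect to the norm `hexNorm`. -/
def rot : ℤ × ℤ →+ ℤ × ℤ where
  toFun v := (-v.2, v.1 + v.2)
  map_zero' := rfl
  map_add' u v := by ext <;> simp <;> ring

lemma rot_apply (v : ℤ × ℤ) : rot v = (-v.2, v.1 + v.2) := rfl

lemma rot_rot (v : ℤ × ℤ) : rot (rot v) = rot v - v := by
  ext
  · simp [rot_apply, sub_eq_add_neg, add_comm]
  · simp [rot_apply]

lemma rot_rot_rot (v : ℤ × ℤ) : rot (rot (rot v)) = -v := by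
  rw [rot_rot (rot v), rot_rot, sub_sub_cancel_left]

lemma hexNorm_le_iff {v : ℤ × ℤ} {n : ℤ} :
    hexNorm v ≤ n ↔ (-n ≤ v.1 ∧ v.1 ≤ n) ∧ (-n ≤ v.2 ∧ v.2 ≤ n) ∧
      -n ≤ v.1 + v.2 ∧ v.1 + v.2 ≤ n := by
  simp only [hexNorm, max_le_iff, abs_le, and_assoc]

lemma hexNorm_neg (v : ℤ × ℤ) : hexNorm (-v) = hexNorm v := by
  simp only [hexNorm, Prod.fst_neg, Prod.snd_neg, abs_neg, ← neg_add]

lemma hexNorm_sub_comm (u v : ℤ × ℤ) : hexNorm (u - v) = hexNorm (v - u) := by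
  rw [← hexNorm_neg, neg_sub]

lemma hexNorm_rot (v : ℤ × ℤ) : hexNorm (rot v) = hexNorm v := by
  have h : -v.2 + (v.1 + v.2) = v.1 := by ring
  simp only [hexNorm, rot_apply, h, abs_neg]
  exact max_right_comm _ _ _ |>.trans (by rw [max_comm |v.2|, max_right_comm])

lemma hexNorm_nonneg (v : ℤ × ℤ) : 0 ≤ hexNorm v :=
  (abs_nonneg _).trans (le_max_right _ _)

lemma hexNorm_eq_zero_iff {v : ℤ × ℤ} : hexNorm v = 0 ↔ v = 0 := by
  refine ⟨fun h => ?_, fun h => by simp [h, hexNorm]⟩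
  have := hexNorm_le_iff.1 h.le
  ext <;> simp <;> omega

lemma hexNorm_eq_one_iff {d : ℤ × ℤ} :
    hexNorm d = 1 ↔ d = (1, 0) ∨ d = (0, 1) ∨ d = (-1, 1) ∨ d = (-1, 0) ∨ d = (0, -1) ∨
      d = (1, -1) := by
  refine ⟨fun h => ?_, ?_⟩
  · obtain ⟨x, y⟩ := d
    have h1 := hexNorm_le_iff.1 h.le
    have h0 : ¬ hexNorm (x, y) = 0 := by omega
    rw [hexNorm_eq_zero_iff] at h0
    simp only [Prod.mk.injEq, Prod.mk_eq_zero] at h0 h1 ⊢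
    omega
  · rintro (rfl | rfl | rfl | rfl | rfl | rfl) <;> simp [hexNorm]

lemma eq_of_hexNorm_eq_one {d e : ℤ × ℤ} (hd : hexNorm d = 1) (he : hexNorm e = 1) :
    e = d ∨ e = rot d ∨ e = rot (rot d) ∨ e = -d ∨ e = -rot d ∨ e = -rot (rot d) := by
  rw [hexNorm_eq_one_iff] at hd he
  rcases hd with rfl | rfl | rfl | rfl | rfl | rfl <;>
    rcases he with rfl | rfl | rfl | rfl | rfl | rfl <;> simp [rot_apply]

end HexLattice

section Slack

variable {A : Type*} [AddCommGroup A]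

/-- The rhombus with acute vertices `p` and `p + d + rot d` and obtuse vertices `p + d` and
`p + rot d`: the amount by which `g` bends along the short diagonal. -/
def slack (g : ℤ × ℤ → A) (p d : ℤ × ℤ) : A :=
  g (p + d) + g (p + rot d) - g p - g (p + d + rot d)

/-- The amount by which `g` bends at `v` along the lattice line through `v` in direction `d`. -/
def secondDiff (g : ℤ × ℤ → A) (v d : ℤ × ℤ) : A := g v + g v - g (v + d) - g (v - d)

variable (g : ℤ × ℤ → A) (p v d : ℤ × ℤ)

lemma slack_opposite : slack g (p + d + rot d) (-d) = slack g p d := by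
  simp only [slack, map_neg]
  abel_nf

lemma secondDiff_neg : secondDiff g v (-d) = secondDiff g v d := by
  simp only [secondDiff]
  abel_nf

lemma secondDiff_eq_or {d e : ℤ × ℤ} (hd : hexNorm d = 1) (he : hexNorm e = 1) :
    secondDiff g v e = secondDiff g v d ∨ secondDiff g v e = secondDiff g v (rot d) ∨
      secondDiff g v e = secondDiff g v (rot (rot d)) := by
  rcases eq_of_hexNorm_eq_one hd he with rfl | rfl | rfl | rfl | rfl | rfl <;>
    simp [secondDiff_neg]

lemma secondDiff_eq_slack_add_slack :
    secondDiff g v d = slack g (v + d) (rot (rot d)) + slack g (v + rot d) (-d) := by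
  simp only [slack, secondDiff, map_neg, rot_rot, map_sub]
  abel_nf

lemma secondDiff_rot_eq_slack_add_slack :
    secondDiff g v (rot d) = slack g (v + rot d) (-rot d) + slack g (v + d) (-d) := by
  simp only [slack, secondDiff, map_neg, rot_rot]
  abel_nf

lemma secondDiff_rot_rot_eq_slack_add_slack :
    secondDiff g v (rot (rot d)) =
      slack g (v + d) (rot (rot d)) + slack g (v + rot d) (-rot d) := by
  simp only [slack, secondDiff, map_neg, rot_rot, map_sub]
  abel_nf

lemma secondDiff_add_rot :
    secondDiff g (p + rot d) d = slack g p d + slack g (p + d) (rot (rot d)) := by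
  simp only [slack, secondDiff, rot_rot, map_sub]
  abel_nf

lemma secondDiff_add_self_rot :
    secondDiff g (p + d) (rot d) = slack g p d + slack g (p + rot d) (-rot d) := by
  simp only [slack, secondDiff, map_neg, rot_rot]
  abel_nf

lemma slack_add_rot_rot :
    slack g (v + d) (rot (rot d)) = g v + g (v + rot d) - g (v + d) - g (v + rot (rot d)) := by
  simp only [slack, rot_rot, map_sub]
  abel_nf

lemma secondDiff_eq_slack_rot_rot :
    secondDiff g v d =
      slack g (v + d) (rot (rot d)) + slack g (v + rot d) (rot (rot (rot d))) := by
  rw [secondDiff_eq_slack_add_slack, rot_rot_rot]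

lemma slack_neg : slack (-g) p d = -slack g p d := by
  simp only [slack, Pi.neg_apply]
  abel

end Slack

/-- A hive on the triangular lattice: a function whose piecewise linear interpolation is concave
across every edge. -/
def IsHive (g : ℤ × ℤ → ℝ) : Prop := ∀ p d, hexNorm d = 1 → 0 ≤ slack g p d

/-- The function by which a hive `g` can be raised: `1` at the vertices where `g` is linear along
exactly one of the three lattice lines, `2` where it is linear along all of them, `0` elsewhere. -/
def raise (g : ℤ × ℤ → ℝ) (v : ℤ × ℤ) : ℝ :=
  (if ∃ d, hexNorm d = 1 ∧ secondDiff g v d = 0 then 1 else 0) +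
    if ∀ d, hexNorm d = 1 → secondDiff g v d = 0 then 1 else 0

namespace IsHive

variable {g : ℤ × ℤ → ℝ} {p v d e : ℤ × ℤ}

lemma slack_neg_nonneg (hg : IsHive g) (hd : hexNorm d = 1) (v : ℤ × ℤ) :
    0 ≤ slack g v (-d) :=
  hg v _ (by rwa [hexNorm_neg])

lemma slack_rot_rot_nonneg (hg : IsHive g) (hd : hexNorm d = 1) (v : ℤ × ℤ) :
    0 ≤ slack g v (rot (rot d)) :=
  hg v _ (by rwa [hexNorm_rot, hexNorm_rot])

lemma secondDiff_nonneg (hg : IsHive g) (hd : hexNorm d = 1) (v : ℤ × ℤ) :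
    0 ≤ secondDiff g v d := by
  rw [secondDiff_eq_slack_add_slack]
  exact add_nonneg (hg.slack_rot_rot_nonneg hd _) (hg.slack_neg_nonneg hd _)

lemma secondDiff_eq_zero_of_two (hg : IsHive g) (hd : hexNorm d = 1)
    (h₁ : secondDiff g v d = 0) (h₂ : secondDiff g v (rot d) = 0) (he : hexNorm e = 1) :
    secondDiff g v e = 0 := by
  have hd' : hexNorm (rot d) = 1 := by rwa [hexNorm_rot]
  have h₃ : secondDiff g v (rot (rot d)) = 0 := by
    linarith [secondDiff_eq_slack_add_slack g v d, secondDiff_rot_eq_slack_add_slack g v d,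
      secondDiff_rot_rot_eq_slack_add_slack g v d, hg.slack_rot_rot_nonneg hd (v + d),
      hg.slack_neg_nonneg hd (v + rot d), hg.slack_neg_nonneg hd' (v + rot d),
      hg.slack_neg_nonneg hd (v + d)]
  rcases secondDiff_eq_or g v hd he with h | h | h <;> rwa [h]

lemma indicator_add_indicator_le_raise (hg : IsHive g) (hd : hexNorm d = 1) :
    (if secondDiff g v d = 0 then 1 else 0) + (if secondDiff g v (rot d) = 0 then 1 else 0) ≤
      raise g v := by
  have hd' : hexNorm (rot d) = 1 := by rwa [hexNorm_rot]
  have h_one (e) (he : hexNorm e = 1) (h : secondDiff g v e = 0) : 1 ≤ raise g v := by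
    rw [raise, if_pos ⟨e, he, h⟩]; split_ifs <;> norm_num
  split_ifs with h₁ h₂ h₂
  · have h_all (e) (he : hexNorm e = 1) := hg.secondDiff_eq_zero_of_two hd h₁ h₂ he
    rw [raise, if_pos ⟨d, hd, h₁⟩, if_pos h_all]
  · simpa using h_one d hd h₁
  · simpa using h_one _ hd' h₂
  · rw [raise]; split_ifs <;> norm_num

lemma raise_le_indicator_add_indicator (hg : IsHive g) (hd : hexNorm d = 1)
    (hp : slack g p d = 0) :
    raise g p ≤ (if secondDiff g (p + d) (rot d) = 0 then 1 else 0) +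
      if secondDiff g (p + rot d) d = 0 then 1 else 0 := by
  have hd' : hexNorm (rot d) = 1 := by rwa [hexNorm_rot]
  have hd'' : hexNorm (rot (rot d)) = 1 := by rwa [hexNorm_rot]
  have h₁ := hg.slack_rot_rot_nonneg hd (p + d)
  have h₂ := hg.slack_neg_nonneg hd (p + rot d)
  have h₃ := hg.slack_neg_nonneg hd' (p + rot d)
  have h₄ := hg.slack_neg_nonneg hd (p + d)
  rw [secondDiff_add_self_rot, secondDiff_add_rot, hp, zero_add, zero_add]
  have h_rot_rot (h : secondDiff g p (rot (rot d)) = 0) :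
      slack g (p + rot d) (-rot d) = 0 ∧ slack g (p + d) (rot (rot d)) = 0 := by
    rw [secondDiff_rot_rot_eq_slack_add_slack] at h
    constructor <;> linarith
  by_cases h_all : ∀ e, hexNorm e = 1 → secondDiff g p e = 0
  · obtain ⟨h, h'⟩ := h_rot_rot (h_all _ hd'')
    rw [if_pos h, if_pos h', raise]
    split_ifs <;> norm_num
  by_cases h_ex : ∃ e, hexNorm e = 1 ∧ secondDiff g p e = 0
  · rw [raise, if_pos h_ex, if_neg h_all]
    obtain ⟨e, he, hpe⟩ := h_ex
    have h_or : slack g (p + rot d) (-rot d) = 0 ∨ slack g (p + d) (rot (rot d)) = 0 := by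
      have h_d (h : secondDiff g p d = 0) : slack g (p + d) (rot (rot d)) = 0 := by
        rw [secondDiff_eq_slack_add_slack] at h; linarith
      have h_rot (h : secondDiff g p (rot d) = 0) : slack g (p + rot d) (-rot d) = 0 := by
        rw [secondDiff_rot_eq_slack_add_slack] at h; linarith
      rcases secondDiff_eq_or g p hd he with h | h | h <;> rw [h] at hpe <;> tauto
    rcases h_or with h | h <;> rw [if_pos h] <;> split_ifs <;> norm_num
  · rw [raise, if_neg h_ex, if_neg h_all]
    split_ifs <;> norm_num

theorem slack_raise_nonneg (hg : IsHive g) (hd : hexNorm d = 1) (hp : slack g p d = 0) :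
    0 ≤ slack (raise g) p d := by
  have hd' : hexNorm (-d) = 1 := by rwa [hexNorm_neg]
  have h₁ := hg.raise_le_indicator_add_indicator hd hp
  have h₂ := hg.raise_le_indicator_add_indicator hd' ((slack_opposite g p d).trans hp)
  have h₃ := hg.indicator_add_indicator_le_raise (v := p + d) hd
  have h₄ := hg.indicator_add_indicator_le_raise (v := p + rot d) hd
  rw [map_neg, secondDiff_neg, secondDiff_neg, add_neg_cancel_right,
    show p + d + rot d + -d = p + rot d by abel] at h₂
  rw [slack]
  linarith

end IsHive

lemma raise_eq_zero_iff {g : ℤ × ℤ → ℝ} {v : ℤ × ℤ} :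
    raise g v = 0 ↔ ∀ d, hexNorm d = 1 → secondDiff g v d ≠ 0 := by
  refine ⟨fun h d hd hv => ?_, fun h => ?_⟩
  · rw [raise, if_pos ⟨d, hd, hv⟩] at h
    split_ifs at h <;> norm_num at h
  · have h1 : hexNorm (1, 0) = 1 := by simp [hexNorm]
    rw [raise, if_neg (by simpa using h), if_neg fun h' => h _ h1 (h' _ h1), add_zero]

lemma raise_nonneg (g : ℤ × ℤ → ℝ) (v : ℤ × ℤ) : 0 ≤ raise g v := by
  rw [raise]; split_ifs <;> norm_num

/-- Discrete convexity of a set of lattice points: with `p` and `q` it contains the lattice points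
next to the midpoint of `p` and `q`. -/
def IsDiscretelyConvex (R : Set (ℤ × ℤ)) : Prop :=
  ∀ ⦃p⦄, p ∈ R → ∀ ⦃q⦄, q ∈ R → ∀ ⦃a b⦄, a + b = p + q → hexNorm (a - b) ≤ 1 → a ∈ R

lemma IsDiscretelyConvex.notMem_or_notMem {I : Set (ℤ × ℤ)} (hI : IsDiscretelyConvex I)
    {v p q : ℤ × ℤ} (hv : v ∉ I) (h : hexNorm (p + q - v - v) ≤ 1) : p ∉ I ∨ q ∉ I := by
  by_contra! hpq
  refine hv (hI hpq.1 hpq.2 (b := p + q - v) (by abel) ?_)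
  rwa [hexNorm_sub_comm]

/-- A hive all of whose rhombi bend strictly. -/
def IsStrictHive (f : ℤ × ℤ → ℝ) : Prop := ∀ p d, hexNorm d = 1 → 0 < slack f p d

-- Discrete convexity leaves at most two neighbours of `v`, and these adjacent, in `I`.
lemma IsHive.secondDiff_pos_of_notMem {I : Set (ℤ × ℤ)} (hI : IsDiscretelyConvex I)
    {f g : ℤ × ℤ → ℝ} (hg : IsHive g) (hf : IsStrictHive f) (hgf : ∀ v ∉ I, g v = f v)
    {v d : ℤ × ℤ} (hv : v ∉ I) (hd : hexNorm d = 1) : 0 < secondDiff g v d := by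
  have h_rot {e} (he : hexNorm e = 1) : hexNorm (rot e) = 1 := by rwa [hexNorm_rot]
  have h_nonneg {e} (he : hexNorm e = 1) := hg (v + e) _ (h_rot (h_rot he))
  have h_pos {e} (he : hexNorm e = 1) (h₀ : v + e ∉ I) (h₁ : v + rot e ∉ I)
      (h₂ : v + rot (rot e) ∉ I) : 0 < slack g (v + e) (rot (rot e)) := by
    have := hf (v + e) _ (h_rot (h_rot he))
    rw [slack_add_rot_rot] at this ⊢
    rwa [hgf _ hv, hgf _ h₀, hgf _ h₁, hgf _ h₂]
  have h_opposite (e) : v + e ∉ I ∨ v + -e ∉ I :=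
    hI.notMem_or_notMem hv (by rw [show v + e + (v + -e) - v - v = 0 by abel]; decide)
  have h_wedge {e} (he : hexNorm e = 1) : v + e ∉ I ∨ v + rot (rot e) ∉ I :=
    hI.notMem_or_notMem hv <| by
      rw [rot_rot, show v + e + (v + (rot e - e)) - v - v = rot e by abel, hexNorm_rot, he]
  have h_pos_of_mem {e} (he : hexNorm e = 1) (h : v + rot e ∈ I) :
      0 < slack g (v + -e) (rot (rot (-e))) := by
    refine h_pos (by rwa [hexNorm_neg]) ?_ ?_ ?_
    · simpa only [rot_rot_rot, h, not_true, false_or] using h_wedge (h_rot he)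
    · simpa only [map_neg, h, not_true, false_or] using h_opposite (rot e)
    · simpa only [map_neg, rot_rot_rot, neg_neg, h, not_true, or_false] using
        h_wedge (h_rot (h_rot (h_rot (h_rot (h_rot he)))))
  have h_sum {e} (he : hexNorm e = 1) (h : v + rot e ∈ I ∨ v + rot (rot e) ∈ I) :
      0 < secondDiff g v e := by
    rw [← secondDiff_neg, secondDiff_eq_slack_rot_rot]
    have he' : hexNorm (-e) = 1 := by rwa [hexNorm_neg]
    rcases h with h | h
    · exact add_pos_of_pos_of_nonneg (h_pos_of_mem he h) (h_nonneg (h_rot he'))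
    · refine add_pos_of_nonneg_of_pos (h_nonneg he') ?_
      simpa only [map_neg] using h_pos_of_mem (h_rot he) h
  by_cases h : v + rot d ∈ I ∨ v + rot (rot d) ∈ I
  · exact h_sum hd h
  push Not at h
  rw [secondDiff_eq_slack_rot_rot]
  rcases h_opposite d with h₀ | h₀
  · exact add_pos_of_pos_of_nonneg (h_pos hd h₀ h.1 h.2) (h_nonneg (h_rot hd))
  · refine add_pos_of_nonneg_of_pos (h_nonneg hd) (h_pos (h_rot hd) h.1 h.2 ?_)
    rwa [rot_rot_rot]

lemma le_add_mul_of_concave {u : ℤ → ℝ} (hu : ∀ k, u (k + 1) + u (k - 1) ≤ u k + u k) (k n : ℤ) :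
    u (k + n) ≤ u k + n * (u (k + 1) - u k) := by
  have h_anti : Antitone fun j => u (j + 1) - u j :=
    antitone_int_of_succ_le fun j => by
      have := hu (j + 1)
      rw [add_sub_cancel_right] at this
      linarith
  induction n with
  | zero => simp
  | succ n ih =>
    have : u (k + n + 1) - u (k + n) ≤ u (k + 1) - u k := h_anti (by omega)
    rw [← add_assoc]
    push_cast at ih ⊢
    linarith
  | pred n ih =>
    have : u (k + 1) - u k ≤ u (k + (-n - 1) + 1) - u (k + (-n - 1)) := h_anti (by omega)
    rw [show k + (-(n : ℤ) - 1) + 1 = k + -n by ring] at this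
    push_cast at ih ⊢
    linarith

namespace IsHive

variable {g : ℤ × ℤ → ℝ} {d : ℤ × ℤ}

lemma le_add_smul (hg : IsHive g) (hd : hexNorm d = 1) (v : ℤ × ℤ) (n : ℤ) :
    g (v + n • d) ≤ g v + n * (g (v + d) - g v) := by
  have h := le_add_mul_of_concave (u := fun k => g (v + k • d)) (fun k => ?_) 0 n
  · simpa using h
  · have := hg.secondDiff_nonneg hd (v + k • d)
    rw [secondDiff] at this
    simp only [add_smul, sub_smul, one_smul, ← add_assoc, ← add_sub_assoc]
    linarith

lemma add_le_add_self (hg : IsHive g) (hd : hexNorm d = 1) (v : ℤ × ℤ) (n : ℤ) :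
    g (v + n • d) + g (v - n • d) ≤ g v + g v := by
  have h₁ := hg.le_add_smul hd v n
  have h₂ := hg.le_add_smul hd v (-n)
  rw [neg_smul, ← sub_eq_add_neg] at h₂
  push_cast at h₂
  linarith

lemma exists_bound (I : Finset (ℤ × ℤ)) (h : ℤ × ℤ → ℝ) : ∃ B : ℤ × ℤ → ℝ,
    ∀ g, IsHive g → (∀ u ∉ I, |g u| ≤ h u) → ∀ v, |g v| ≤ B v := by
  obtain ⟨N, hN⟩ : ∃ N, ∀ v ∈ I, |v.1| ≤ N :=
    ⟨∑ v ∈ I, |v.1|, fun v hv =>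
      Finset.single_le_sum (f := fun u : ℤ × ℤ => |u.1|) (fun _ _ => abs_nonneg _) hv⟩
  let e : ℤ × ℤ := (1, 0)
  have he : hexNorm e = 1 := by simp [e, hexNorm]
  have h_off {v} (hv : v ∈ I) {m : ℤ} (hm : 2 * N < |m|) : v + m • e ∉ I := fun h => by
    have h₁ := hN _ hv
    have h₂ := hN _ h
    simp only [e, Prod.fst_add, Prod.smul_fst, smul_eq_mul, mul_one] at h₂
    have := abs_sub (v.1 + m) v.1
    rw [add_sub_cancel_left] at this
    omega
  set n : ℤ := 2 * |N| + 1
  have hN' := le_abs_self N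
  have hn : |n| = n := abs_of_nonneg (by positivity)
  have hN₀ := abs_nonneg N
  refine ⟨fun v => |h v| + 2 * |h (v + n • e)| + |h (v - n • e)| + |h (v + (2 * n) • e)|,
    fun g hg hgh v => ?_⟩
  have h_le {u} (hu : u ∉ I) : |g u| ≤ |h u| := (hgh u hu).trans (le_abs_self _)
  by_cases hv : v ∈ I
  · have h₁ := h_le (h_off hv (m := n) (by omega))
    have h₂ := h_le (h_off hv (m := -n) (by rw [abs_neg]; omega))
    have h₃ := h_le (h_off hv (m := 2 * n) (by rw [abs_mul, hn, abs_two]; omega))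
    rw [neg_smul, ← sub_eq_add_neg] at h₂
    have h_lower := hg.add_le_add_self he v n
    have h_upper := hg.add_le_add_self he (v + n • e) n
    rw [add_sub_cancel_right, add_assoc, ← add_smul, ← two_mul] at h_upper
    rw [abs_le] at h₁ h₂ h₃ ⊢
    constructor <;> linarith [abs_nonneg (h v), abs_nonneg (h (v + n • e)),
      abs_nonneg (h (v - n • e)), abs_nonneg (h (v + (2 * n) • e))]
  · linarith [h_le hv, abs_nonneg (h (v + n • e)), abs_nonneg (h (v - n • e)),
      abs_nonneg (h (v + (2 * n) • e))]

end IsHive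

lemma continuous_slack (p d : ℤ × ℤ) : Continuous fun g : ℤ × ℤ → ℝ => slack g p d := by
  unfold slack; fun_prop

lemma isClosed_setOf_isHive : IsClosed {g | IsHive g} := by
  simp only [IsHive, Set.ofPred_forall]
  exact isClosed_iInter fun p => isClosed_iInter fun d => isClosed_iInter fun _ =>
    isClosed_le continuous_const (continuous_slack p d)

lemma isCompact_setOf_isHive_of_bounded (I : Finset (ℤ × ℤ)) (h : ℤ × ℤ → ℝ) :
    IsCompact {g | IsHive g ∧ ∀ u ∉ I, |g u| ≤ h u} := by
  obtain ⟨B, hB⟩ := IsHive.exists_bound I h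
  have h_closed : IsClosed {g : ℤ × ℤ → ℝ | ∀ u ∉ I, |g u| ≤ h u} := by
    simp only [Set.ofPred_forall]
    exact isClosed_iInter fun u => isClosed_iInter fun _ => isClosed_le (by fun_prop) (by fun_prop)
  exact (isCompact_univ_pi fun v => isCompact_Icc (a := -B v) (b := B v)).of_isClosed_subset
    (isClosed_setOf_isHive.inter h_closed) fun g hg v _ => abs_le.1 (hB g hg.1 hg.2 v)

/-- The hives that agree with `f` outside `I`: the hive polytope with boundary values `f`. -/
def hivesExtending (I : Finset (ℤ × ℤ)) (f : ℤ × ℤ → ℝ) : Set (ℤ × ℤ → ℝ) :=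
  {g | IsHive g ∧ ∀ u ∉ I, g u = f u}

lemma isCompact_hivesExtending (I : Finset (ℤ × ℤ)) (f : ℤ × ℤ → ℝ) :
    IsCompact (hivesExtending I f) := by
  have h_closed : IsClosed {g : ℤ × ℤ → ℝ | ∀ u ∉ I, g u = f u} := by
    simp only [Set.ofPred_forall]
    exact isClosed_iInter fun u => isClosed_iInter fun _ => isClosed_eq (by fun_prop) (by fun_prop)
  exact (isCompact_setOf_isHive_of_bounded I fun u => |f u|).of_isClosed_subset
    (isClosed_setOf_isHive.inter h_closed) fun g hg =>
      ⟨hg.1, fun u hu => (congrArg _ (hg.2 u hu)).le⟩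

section Finiteness

/-- The rhombi, given as in `slack` by an acute vertex and a direction, with a vertex in `I`. -/
def rhombiMeeting (I : Set (ℤ × ℤ)) : Set ((ℤ × ℤ) × (ℤ × ℤ)) :=
  {x | hexNorm x.2 = 1 ∧ (x.1 ∈ I ∨ x.1 + x.2 ∈ I ∨ x.1 + rot x.2 ∈ I ∨ x.1 + x.2 + rot x.2 ∈ I)}

lemma finite_hexNorm_eq_one : {d | hexNorm d = 1}.Finite := by
  simp only [hexNorm_eq_one_iff]
  exact Set.toFinite {(1, 0), (0, 1), (-1, 1), (-1, 0), (0, -1), (1, -1)}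

lemma finite_rhombiMeeting {I : Set (ℤ × ℤ)} (hI : I.Finite) : (rhombiMeeting I).Finite := by
  have h_fin (ℓ : ℤ × ℤ → ℤ × ℤ) :
      {x : (ℤ × ℤ) × (ℤ × ℤ) | hexNorm x.2 = 1 ∧ x.1 + ℓ x.2 ∈ I}.Finite :=
    ((hI.prod finite_hexNorm_eq_one).image fun y => (y.1 - ℓ y.2, y.2)).subset fun x hx =>
      ⟨(x.1 + ℓ x.2, x.2), ⟨hx.2, hx.1⟩, by simp⟩
  refine ((h_fin 0).union ((h_fin id).union
    ((h_fin rot).union (h_fin fun d => d + rot d)))).subset ?_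
  rintro x ⟨hx, h | h | h | h⟩
  · exact .inl ⟨hx, by simpa using h⟩
  · exact .inr (.inl ⟨hx, h⟩)
  · exact .inr (.inr (.inl ⟨hx, h⟩))
  · exact .inr (.inr (.inr ⟨hx, by simpa [← add_assoc] using h⟩))

lemma slack_congr_of_notMem_rhombiMeeting {A : Type*} [AddCommGroup A] {I : Set (ℤ × ℤ)}
    {f g : ℤ × ℤ → A} (h : ∀ v ∉ I, f v = g v) {p d : ℤ × ℤ} (hd : hexNorm d = 1)
    (hp : (p, d) ∉ rhombiMeeting I) : slack f p d = slack g p d := by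
  simp only [rhombiMeeting, Set.mem_ofPred_eq, hd, true_and, not_or] at hp
  rw [slack, slack, h _ hp.1, h _ hp.2.1, h _ hp.2.2.1, h _ hp.2.2.2]

end Finiteness

lemma slack_smul (c : ℝ) (g : ℤ × ℤ → ℝ) (p d : ℤ × ℤ) : slack (c • g) p d = c * slack g p d := by
  simp only [slack, Pi.smul_apply, smul_eq_mul]; ring

lemma slack_add {A : Type*} [AddCommGroup A] (f g : ℤ × ℤ → A) (p d : ℤ × ℤ) :
    slack (f + g) p d = slack f p d + slack g p d := by
  simp only [slack, Pi.add_apply]; abel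

open Filter Topology in
lemma IsHive.eventually_isHive_add_smul {I : Finset (ℤ × ℤ)} {g D : ℤ × ℤ → ℝ} (hg : IsHive g)
    (hD : ∀ v ∉ I, D v = 0) (h : ∀ p d, hexNorm d = 1 → slack g p d = 0 → 0 ≤ slack D p d) :
    ∀ᶠ ε : ℝ in 𝓝[>] 0, IsHive (g + ε • D) := by
  have h_meeting : ∀ᶠ ε : ℝ in 𝓝[>] 0, ∀ x ∈ rhombiMeeting I, 0 ≤ slack (g + ε • D) x.1 x.2 := by
    refine (eventually_all_finite (finite_rhombiMeeting I.finite_toSet)).2 fun ⟨p, d⟩ hx => ?_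
    simp only [slack_add, slack_smul]
    rcases (hg p d hx.1).eq_or_lt with h₀ | h₀
    · filter_upwards [self_mem_nhdsWithin] with ε hε
      exact add_nonneg h₀.le (mul_nonneg (Set.mem_Ioi.1 hε).le (h p d hx.1 h₀.symm))
    · have h_tendsto : Tendsto (fun ε : ℝ => slack g p d + ε * slack D p d) (𝓝[>] 0)
          (𝓝 (slack g p d + 0 * slack D p d)) :=
        (Continuous.tendsto (by fun_prop) 0).mono_left nhdsWithin_le_nhds
      filter_upwards [h_tendsto.eventually_const_lt (by simpa using h₀)] with ε hε using hε.le
  filter_upwards [h_meeting] with ε hε p d hd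
  by_cases hx : (p, d) ∈ rhombiMeeting I
  · exact hε _ hx
  · rw [slack_congr_of_notMem_rhombiMeeting (g := g) (fun v hv => by simp [hD v hv]) hd hx]
    exact hg p d hd

lemma exists_extreme_isMaxOn (I : Finset (ℤ × ℤ)) {f : ℤ × ℤ → ℝ} (hf : IsHive f) :
    ∃ g ∈ hivesExtending I f, IsMaxOn (fun k => ∑ v ∈ I, k v) (hivesExtending I f) g ∧
      ∀ D : ℤ × ℤ → ℝ, g + D ∈ hivesExtending I f → g - D ∈ hivesExtending I f → D = 0 := by
  have h_compact := isCompact_hivesExtending I f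
  have h_cont : Continuous fun k : ℤ × ℤ → ℝ => ∑ v ∈ I, k v := by fun_prop
  obtain ⟨m, hm, h_max⟩ := h_compact.exists_isMaxOn ⟨f, hf, fun _ _ => rfl⟩ h_cont.continuousOn
  let F := hivesExtending I f ∩ {k | ∑ v ∈ I, k v = ∑ v ∈ I, m v}
  have hF : IsCompact F := h_compact.inter_right (isClosed_eq h_cont continuous_const)
  obtain ⟨g, ⟨hg, hgm⟩, h_ext⟩ := hF.extremePoints_nonempty (E := ℤ × ℤ → ℝ) ⟨m, hm, rfl⟩
  have hgm : ∑ v ∈ I, g v = ∑ v ∈ I, m v := hgm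
  refine ⟨g, hg, fun k hk => (h_max hk).trans hgm.ge, fun D h_add h_sub => ?_⟩
  have h₁ : ∑ v ∈ I, (g + D) v ≤ ∑ v ∈ I, m v := h_max h_add
  have h₂ : ∑ v ∈ I, (g - D) v ≤ ∑ v ∈ I, m v := h_max h_sub
  simp only [Pi.add_apply, Pi.sub_apply, Finset.sum_add_distrib, Finset.sum_sub_distrib] at h₁ h₂
  have h_face {k} (hk : k ∈ hivesExtending I f) (h : ∑ v ∈ I, k v = ∑ v ∈ I, m v) : k ∈ F := ⟨hk, h⟩
  have h_mid : g ∈ openSegment ℝ (g + D) (g - D) :=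
    ⟨1 / 2, 1 / 2, by norm_num, by norm_num, by norm_num, by module⟩
  have h_eq := h_ext (h_face h_add ?_) (h_face h_sub ?_) h_mid
  · simpa using h_eq
  · simp only [Pi.add_apply, Finset.sum_add_distrib]; linarith
  · simp only [Pi.sub_apply, Finset.sum_sub_distrib]; linarith

/-- A set of rhombi, given as in `slack`, no two of which share a triangle; a rhombus is listed
with both of its acute vertices. -/
structure IsRhombusPacking (T : Set ((ℤ × ℤ) × (ℤ × ℤ))) : Prop where
  hexNorm_eq_one : ∀ ⦃p d⦄, (p, d) ∈ T → hexNorm d = 1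
  opposite_mem : ∀ ⦃p d⦄, (p, d) ∈ T → (p + d + rot d, -d) ∈ T
  notMem_of_mem : ∀ ⦃p d⦄, (p, d) ∈ T → (p + d, rot (rot d)) ∉ T

/-- The rhombi in `T` are rigid relative to `I`: no nonzero perturbation supported in `I` keeps
all of them flat. -/
def IsRigid (A : Type*) [AddCommGroup A] (I : Finset (ℤ × ℤ)) (T : Set ((ℤ × ℤ) × (ℤ × ℤ))) :
    Prop :=
  ∀ D : ℤ × ℤ → A, (∀ v ∉ I, D v = 0) → (∀ p d, (p, d) ∈ T → slack D p d = 0) → D = 0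

/-- The rhombi along whose short diagonal `g` does not bend. -/
def flatRhombi (g : ℤ × ℤ → ℝ) : Set ((ℤ × ℤ) × (ℤ × ℤ)) :=
  {x | hexNorm x.2 = 1 ∧ slack g x.1 x.2 = 0}

lemma isRhombusPacking_flatRhombi {g : ℤ × ℤ → ℝ}
    (h : ∀ v d, hexNorm d = 1 → secondDiff g v d ≠ 0) : IsRhombusPacking (flatRhombi g) where
  hexNorm_eq_one _ _ hx := hx.1
  opposite_mem p d hx := ⟨(hexNorm_neg d).trans hx.1, (slack_opposite g p d).trans hx.2⟩
  notMem_of_mem p d hx hx' := h (p + rot d) d hx.1 <| by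
    rw [secondDiff_add_rot, hx.2, hx'.2, add_zero]

section ExtremeHive

variable {I : Finset (ℤ × ℤ)} {f g : ℤ × ℤ → ℝ}

open Filter Topology in
lemma eventually_add_smul_mem_hivesExtending (hg : g ∈ hivesExtending I f) {D : ℤ × ℤ → ℝ}
    (hD : ∀ v ∉ I, D v = 0) (h : ∀ p d, hexNorm d = 1 → slack g p d = 0 → 0 ≤ slack D p d) :
    ∀ᶠ ε : ℝ in 𝓝[>] 0, g + ε • D ∈ hivesExtending I f := by
  filter_upwards [hg.1.eventually_isHive_add_smul hD h] with ε hε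
  exact ⟨hε, fun v hv => by simp [hD v hv, hg.2 v hv]⟩

lemma secondDiff_ne_zero_of_isMaxOn (hI : IsDiscretelyConvex (I : Set (ℤ × ℤ)))
    (hf : IsStrictHive f) (hg : g ∈ hivesExtending I f)
    (h_max : IsMaxOn (fun k => ∑ v ∈ I, k v) (hivesExtending I f) g) {v d : ℤ × ℤ}
    (hd : hexNorm d = 1) : secondDiff g v d ≠ 0 := by
  have h_off {v} (hv : v ∉ I) : raise g v = 0 :=
    raise_eq_zero_iff.2 fun d hd =>
      (hg.1.secondDiff_pos_of_notMem hI hf hg.2 hv hd).ne'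
  obtain ⟨ε, hε, hε₀⟩ := ((eventually_add_smul_mem_hivesExtending hg (fun _ => h_off)
    fun p d hd => hg.1.slack_raise_nonneg hd).and self_mem_nhdsWithin).exists
  have h_le : ∑ v ∈ I, (g + ε • raise g) v ≤ ∑ v ∈ I, g v := h_max hε
  simp only [Pi.add_apply, Pi.smul_apply, smul_eq_mul, Finset.sum_add_distrib, ← Finset.mul_sum,
    add_le_iff_nonpos_right] at h_le
  have h_sum : ∑ v ∈ I, raise g v = 0 :=
    le_antisymm (nonpos_of_mul_nonpos_right h_le hε₀)
      (Finset.sum_nonneg fun v _ => raise_nonneg g v)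
  refine raise_eq_zero_iff.1 ?_ d hd
  by_cases hv : v ∈ I
  · exact (Finset.sum_eq_zero_iff_of_nonneg fun v _ => raise_nonneg g v).1 h_sum v hv
  · exact h_off hv

lemma isRigid_flatRhombi_of_extreme (hg : g ∈ hivesExtending I f)
    (h_ext : ∀ D : ℤ × ℤ → ℝ, g + D ∈ hivesExtending I f → g - D ∈ hivesExtending I f → D = 0) :
    IsRigid ℝ I (flatRhombi g) := by
  intro D hD h_flat
  have h_add := eventually_add_smul_mem_hivesExtending hg hD
    fun p d hd h => (h_flat p d ⟨hd, h⟩).ge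
  have h_sub := eventually_add_smul_mem_hivesExtending hg (D := -D) (fun v hv => by simp [hD v hv])
    fun p d hd h => by rw [slack_neg, h_flat p d ⟨hd, h⟩, neg_zero]
  obtain ⟨ε, ⟨hε, hε'⟩, hε₀⟩ := ((h_add.and h_sub).and self_mem_nhdsWithin).exists
  rw [smul_neg, ← sub_eq_add_neg] at hε'
  exact (smul_eq_zero.1 (h_ext _ hε hε')).resolve_left (Set.mem_Ioi.1 hε₀).ne'

lemma IsStrictHive.isHive (hf : IsStrictHive f) : IsHive f := fun p d hd => (hf p d hd).le

lemma IsStrictHive.exists_rigid_packing (hI : IsDiscretelyConvex (I : Set (ℤ × ℤ)))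
    (hf : IsStrictHive f) :
    ∃ g ∈ hivesExtending I f, IsRhombusPacking (flatRhombi g) ∧ IsRigid ℝ I (flatRhombi g) := by
  obtain ⟨g, hg, h_max, h_ext⟩ := exists_extreme_isMaxOn I hf.isHive
  exact ⟨g, hg, isRhombusPacking_flatRhombi fun v d =>
    secondDiff_ne_zero_of_isMaxOn hI hf hg h_max, isRigid_flatRhombi_of_extreme hg h_ext⟩

end ExtremeHive

/-- A strictly concave quadratic form on the lattice. -/
def quadratic (v : ℤ × ℤ) : ℝ := -(v.1 ^ 2 + v.1 * v.2 + v.2 ^ 2 : ℤ)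

lemma slack_quadratic {d : ℤ × ℤ} (p : ℤ × ℤ) (hd : hexNorm d = 1) : slack quadratic p d = 1 := by
  obtain ⟨x, y⟩ := p
  rw [hexNorm_eq_one_iff] at hd
  rcases hd with rfl | rfl | rfl | rfl | rfl | rfl <;>
    simp [slack, quadratic, rot_apply] <;> ring

lemma IsHive.isStrictHive_add_smul_quadratic {f : ℤ × ℤ → ℝ} (hf : IsHive f) {ε : ℝ}
    (hε : 0 < ε) : IsStrictHive (f + ε • quadratic) := fun p d hd => by
  rw [slack_add, slack_smul, slack_quadratic p hd, mul_one]
  exact add_pos_of_nonneg_of_pos (hf p d hd) hε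

open Filter Topology in
lemma exists_ultrafilter_limit {I : Finset (ℤ × ℤ)} {f : ℤ × ℤ → ℝ} {g : ℕ → ℤ × ℤ → ℝ}
    (hg : ∀ n : ℕ, g n ∈ hivesExtending I (f + (1 / ((n : ℝ) + 1)) • quadratic)) :
    ∃ U : Ultrafilter ℕ, ∃ γ ∈ hivesExtending I f, Tendsto g U (𝓝 γ) := by
  have h_bounded (n : ℕ) : g n ∈ {g | IsHive g ∧ ∀ u ∉ I, |g u| ≤ |f u| + |quadratic u|} := by
    refine ⟨(hg n).1, fun u hu => ?_⟩
    rw [(hg n).2 u hu]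
    refine (abs_add_le _ _).trans (add_le_add_right ?_ _)
    rw [Pi.smul_apply, smul_eq_mul, abs_mul, abs_of_pos Nat.one_div_pos_of_nat]
    refine mul_le_of_le_one_left (abs_nonneg _) ?_
    simpa using Nat.one_div_le_one_div (α := ℝ) (Nat.zero_le n)
  obtain ⟨γ, ⟨hγ, -⟩, h_lim⟩ := (isCompact_setOf_isHive_of_bounded I _).ultrafilter_le_nhds
    ((hyperfilter ℕ).map g) (le_principal_iff.2 (mem_map.2 (univ_mem' h_bounded)))
  refine ⟨hyperfilter ℕ, γ, ⟨hγ, fun u hu => ?_⟩, h_lim⟩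
  have h_tendsto : Tendsto (fun n : ℕ => f u + 1 / ((n : ℝ) + 1) * quadratic u) (hyperfilter ℕ)
      (𝓝 (f u + 0 * quadratic u)) :=
    ((tendsto_one_div_add_atTop_nhds_zero_nat.mul_const _).const_add _).mono_left
      Nat.hyperfilter_le_atTop
  rw [zero_mul, add_zero] at h_tendsto
  refine tendsto_nhds_unique (tendsto_pi_nhds.1 h_lim u) (h_tendsto.congr fun n => ?_)
  rw [(hg n).2 u hu, Pi.add_apply, Pi.smul_apply, smul_eq_mul]

-- A small strictly concave perturbation separates the flat rhombi of an extreme hive; the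
-- perturbation then tends to `0` along an ultrafilter.
open Filter Topology in
theorem IsHive.exists_rigid_packing {I : Finset (ℤ × ℤ)} (hI : IsDiscretelyConvex (I : Set (ℤ × ℤ)))
    {f : ℤ × ℤ → ℝ} (hf : IsHive f) :
    ∃ g ∈ hivesExtending I f, ∃ T ⊆ flatRhombi g, IsRhombusPacking T ∧ IsRigid ℝ I T := by
  have h_strict (n : ℕ) := hf.isStrictHive_add_smul_quadratic (Nat.one_div_pos_of_nat (n := n))
  choose g hg h_packing h_rigid using fun n => (h_strict n).exists_rigid_packing hI
  obtain ⟨U, γ, hγ, h_lim⟩ := exists_ultrafilter_limit hg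
  refine ⟨γ, hγ, {x | ∀ᶠ n in U, x ∈ flatRhombi (g n)}, fun x hx => ?_, ?_, fun D hD h_flat => ?_⟩
  · have h_slack : Tendsto (fun n => slack (g n) x.1 x.2) U (𝓝 (slack γ x.1 x.2)) :=
      ((continuous_slack x.1 x.2).tendsto γ).comp h_lim
    exact ⟨hx.exists.choose_spec.1, tendsto_nhds_unique h_slack
      (tendsto_const_nhds.congr' (hx.mono fun n hn => hn.2.symm))⟩
  · refine ⟨fun p d hx => ?_, fun p d hx => hx.mono fun n hn => (h_packing n).opposite_mem hn,
      fun p d hx hx' => ?_⟩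
    · exact hx.exists.choose_spec.1
    · obtain ⟨n, hn, hn'⟩ := (hx.and hx').exists
      exact (h_packing n).notMem_of_mem hn hn'
  · obtain ⟨n, hn⟩ : ∃ n, ∀ x ∈ rhombiMeeting I, x ∈ flatRhombi (g n) →
        ∀ᶠ m in U, x ∈ flatRhombi (g m) := by
      refine ((eventually_all_finite (l := (U : Filter ℕ))
        (finite_rhombiMeeting I.finite_toSet)).2 fun x _ => ?_).exists
      by_cases hx : ∀ᶠ m in U, x ∈ flatRhombi (g m)
      · exact univ_mem' fun _ _ => hx
      · exact (Ultrafilter.eventually_not.2 hx).mono fun n h h' => absurd h' h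
    refine h_rigid n D hD fun p d hpd => ?_
    by_cases hx : (p, d) ∈ rhombiMeeting I
    · exact h_flat p d (hn _ hx hpd)
    · rw [slack_congr_of_notMem_rhombiMeeting (g := 0) hD hpd.1 hx]
      simp [slack]

section Circulation

variable {E N A : Type*} [AddCommGroup A] (α β : E → N)

/-- A circulation on the directed graph with vertices `N`, in which `e : E` runs from `α e` to
`β e`. -/
def IsCirculation (c : E → A) : Prop :=
  ∀ n, ∑ᶠ e ∈ α ⁻¹' {n}, c e = ∑ᶠ e ∈ β ⁻¹' {n}, c e

variable {α β}

lemma finsum_mem_preimage_eq_sum_filter {c : E → A} {S : Finset E} (hc : Function.support c ⊆ S)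
    (n : N) : ∑ᶠ e ∈ α ⁻¹' {n}, c e = ∑ e ∈ S with α e = n, c e := by
  refine finsum_mem_eq_sum_of_inter_support_eq _ (Set.ext fun e => ?_)
  have := @hc e
  simp only [Set.mem_inter_iff, Set.mem_preimage, Set.mem_singleton_iff, Finset.coe_filter,
    Set.mem_ofPred_eq, Finset.mem_coe] at this ⊢
  tauto

lemma isCirculation_iff {c : E → A} {S : Finset E} (hc : Function.support c ⊆ S) :
    IsCirculation α β c ↔ ∀ n, ∑ e ∈ S with α e = n, c e = ∑ e ∈ S with β e = n, c e := by
  simp only [IsCirculation, finsum_mem_preimage_eq_sum_filter hc]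

lemma one_lt_card_of_sum_eq_zero {S : Finset E} {c : E → A} (h : ∑ e ∈ S, c e = 0)
    (hS : S.Nonempty) (hc : ∀ e ∈ S, c e ≠ 0) : 1 < S.card := by
  by_contra! h_card
  obtain ⟨e, rfl⟩ := Finset.card_eq_one.1 (h_card.antisymm hS.card_pos)
  exact hc e (Finset.mem_singleton_self e) (by simpa using h)

lemma two_le_degree {S : Finset E} {c : E → A} (hc : ∀ e ∈ S, c e ≠ 0) {n : N}
    (h : ∑ e ∈ S with α e = n, c e = ∑ e ∈ S with β e = n, c e) {e : E} (he : e ∈ S)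
    (hn : α e = n ∨ β e = n) : 2 ≤ (S.filter (α · = n)).card + (S.filter (β · = n)).card := by
  have h_ne {s : Finset E} (hs : s ⊆ S) : ∀ e ∈ s, c e ≠ 0 := fun e he => hc e (hs he)
  rcases (S.filter (α · = n)).eq_empty_or_nonempty with hα | hα <;>
    rcases (S.filter (β · = n)).eq_empty_or_nonempty with hβ | hβ
  · have hα' : e ∉ S.filter (α · = n) := by simp [hα]
    have hβ' : e ∉ S.filter (β · = n) := by simp [hβ]
    simp only [Finset.mem_filter, he, true_and] at hα' hβ'
    exact absurd hn (not_or.2 ⟨hα', hβ'⟩)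
  · rw [hα, Finset.sum_empty] at h
    have := one_lt_card_of_sum_eq_zero h.symm hβ (h_ne (Finset.filter_subset _ _))
    omega
  · rw [hβ, Finset.sum_empty] at h
    have := one_lt_card_of_sum_eq_zero h hα (h_ne (Finset.filter_subset _ _))
    omega
  · have := hα.card_pos
    have := hβ.card_pos
    omega

lemma card_nodes_le_card_edges {S : Finset E} {c : E → A} (hc : ∀ e ∈ S, c e ≠ 0)
    (h : ∀ n, ∑ e ∈ S with α e = n, c e = ∑ e ∈ S with β e = n, c e) :
    (S.image α ∪ S.image β).card ≤ S.card := by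
  have hα := Finset.card_eq_sum_card_fiberwise (f := α) (s := S) (t := S.image α ∪ S.image β)
    fun e he => Finset.mem_union_left _ (Finset.mem_image_of_mem α he)
  have hβ := Finset.card_eq_sum_card_fiberwise (f := β) (s := S) (t := S.image α ∪ S.image β)
    fun e he => Finset.mem_union_right _ (Finset.mem_image_of_mem β he)
  have h_sum : ∑ _n ∈ S.image α ∪ S.image β, 2 ≤ S.card + S.card := by
    nth_rw 1 [hα, hβ]
    rw [← Finset.sum_add_distrib]
    refine Finset.sum_le_sum fun n hn => ?_
    simp only [Finset.mem_union, Finset.mem_image] at hn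
    rcases hn with ⟨e, he, hn⟩ | ⟨e, he, hn⟩
    · exact two_le_degree hc (h n) he (.inl hn)
    · exact two_le_degree hc (h n) he (.inr hn)
  rw [Finset.sum_const, smul_eq_mul] at h_sum
  omega

/-- The incidence matrix of the finite directed graph with vertices `V` and edges `S`. -/
def incidence (α β : E → N) (S : Finset E) (V : Finset N) : Matrix V S ℝ :=
  fun n e => (if α e = n then 1 else 0) - if β e = n then 1 else 0

lemma sum_incidence_mulVec {S : Finset E} {V : Finset N} (hα : ∀ e ∈ S, α e ∈ V)
    (hβ : ∀ e ∈ S, β e ∈ V) (r : S → ℝ) : ∑ n, (incidence α β S V).mulVec r n = 0 := by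
  have h_col (γ : E → N) (hγ : ∀ e ∈ S, γ e ∈ V) (e : S) :
      ∑ n : V, (if γ e = n then 1 else 0 : ℝ) = 1 := by
    rw [Finset.sum_coe_sort V fun n => (if γ e = n then 1 else 0 : ℝ), Finset.sum_ite_eq,
      if_pos (hγ e e.2)]
  simp only [Matrix.mulVec, dotProduct]
  rw [Finset.sum_comm]
  simp only [← Finset.sum_mul, incidence, Finset.sum_sub_distrib, h_col α hα, h_col β hβ, sub_self,
    zero_mul, Finset.sum_const_zero]

lemma exists_incidence_mulVec_eq_zero {S : Finset E} {V : Finset N} (hS : S.Nonempty)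
    (hα : ∀ e ∈ S, α e ∈ V) (hβ : ∀ e ∈ S, β e ∈ V) (h_card : V.card ≤ S.card) :
    ∃ r, r ≠ 0 ∧ (incidence α β S V).mulVec r = 0 := by
  by_contra! h
  let L := (incidence α β S V).mulVecLin
  have h_inj : Function.Injective L :=
    (injective_iff_map_eq_zero L).2 fun r hr => by_contra fun h₀ => h r h₀ hr
  have h_finrank : Module.finrank ℝ (S → ℝ) = Module.finrank ℝ (V → ℝ) :=
    (LinearMap.finrank_le_finrank_of_injective h_inj).antisymm (by simpa using h_card)
  obtain ⟨e, he⟩ := hS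
  obtain ⟨r, hr⟩ := (LinearMap.injective_iff_surjective_of_finrank_eq_finrank h_finrank).1 h_inj
    (Pi.single ⟨α e, hα e he⟩ 1)
  have h_sum := sum_incidence_mulVec hα hβ r
  rw [show (incidence α β S V).mulVec r = _ from hr, Finset.sum_pi_single'] at h_sum
  simp at h_sum

theorem IsCirculation.exists_real {c : E → A} (hc : IsCirculation α β c) (h₀ : c ≠ 0)
    (h_fin : (Function.support c).Finite) :
    ∃ r : E → ℝ, r ≠ 0 ∧ Function.support r ⊆ Function.support c ∧ IsCirculation α β r := by
  set S := h_fin.toFinset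
  have hS : Function.support c ⊆ S := h_fin.coe_toFinset.ge
  have h_ne : ∀ e ∈ S, c e ≠ 0 := fun e he => h_fin.mem_toFinset.1 he
  set V := S.image α ∪ S.image β
  have h_card := card_nodes_le_card_edges h_ne ((isCirculation_iff hS).1 hc)
  obtain ⟨r, hr, h_ker⟩ := exists_incidence_mulVec_eq_zero (α := α) (β := β)
    (h_fin.toFinset_nonempty.2 (Function.support_nonempty_iff.2 h₀))
    (fun e he => Finset.mem_union_left _ (Finset.mem_image_of_mem α he))
    (fun e he => Finset.mem_union_right _ (Finset.mem_image_of_mem β he)) h_card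
  let r' : E → ℝ := fun e => if h : e ∈ S then r ⟨e, h⟩ else 0
  have hr' (e : S) : r' e = r e := dif_pos e.2
  have h_supp : Function.support r' ⊆ S := fun e he => by
    by_contra h
    exact he (dif_neg h)
  refine ⟨r', fun h => hr (funext fun e => by rw [← hr', h]; rfl), fun e he =>
    h_fin.mem_toFinset.1 (h_supp he), (isCirculation_iff h_supp).2 fun n => ?_⟩
  by_cases hn : n ∈ V
  · have := congrFun h_ker ⟨n, hn⟩
    simp only [Matrix.mulVec, dotProduct, incidence, sub_mul, ite_mul, one_mul, zero_mul,
      Finset.sum_sub_distrib, Pi.zero_apply, ← hr'] at this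
    rw [Finset.sum_filter, Finset.sum_filter, ← Finset.sum_coe_sort S, ← Finset.sum_coe_sort S]
    exact sub_eq_zero.1 this
  · simp only [V, Finset.mem_union, Finset.mem_image, not_or, not_exists, not_and] at hn
    rw [Finset.filter_false_of_mem hn.1, Finset.filter_false_of_mem hn.2]

end Circulation

section Cocycles

variable {A : Type*} [AddCommGroup A]

/-- The vertices of the upward triangle at the origin. The upward triangle at `v` has the vertices
`v + corner j`, the downward triangle at `w` the vertices `w + corner j + corner (j + 1)`. -/
def corner : Fin 3 → ℤ × ℤ := ![(0, 1), (1, 0), (0, 0)]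

/-- The coboundary of `g`. The edge `(k, v)` runs from `v + corner (k + 2)` to
`v + corner (k + 1)`; it lies opposite to `v + corner k` in the upward triangle at `v`, and it is an
edge of the downward triangle at `v - corner k`. -/
def label (g : ℤ × ℤ → A) (e : Fin 3 × (ℤ × ℤ)) : A :=
  g (e.2 + corner (e.1 + 1)) - g (e.2 + corner (e.1 + 2))

/-- A cocycle: the values around each triangle add up to zero. -/
structure IsCocycle (μ : Fin 3 × (ℤ × ℤ) → A) : Prop where
  up : ∀ v, ∑ j, μ (j, v) = 0
  down : ∀ w, ∑ j, μ (j, w + corner j) = 0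

lemma isCocycle_label (g : ℤ × ℤ → A) : IsCocycle (label g) := by
  constructor <;> intro v <;> simp only [Fin.sum_univ_three, label, Fin.isValue, Fin.reduceAdd]
  · abel
  · rw [add_right_comm v (corner 1) (corner 0), add_right_comm v (corner 2) (corner 1),
      add_right_comm v (corner 2) (corner 0)]
    abel

lemma label_zero_apply (g : ℤ × ℤ → A) (v : ℤ × ℤ) : label g (0, v) = g (v + (1, 0)) - g v := by
  simp [label, corner, show ((0, 0) : ℤ × ℤ) = 0 from rfl]

lemma label_two_apply (g : ℤ × ℤ → A) (v : ℤ × ℤ) :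
    label g (2, v) = g (v + (0, 1)) - g (v + (1, 0)) := by
  simp [label, corner]

lemma eq_zero_of_add_one_eq {u : ℤ → A} {L : ℤ} (h_left : ∀ x ≤ L, u x = 0)
    (h : ∀ x, u (x + 1) = u x) (x : ℤ) : u x = 0 := by
  rcases le_total x L with hx | hx
  · exact h_left x hx
  induction x, hx using Int.leInduction with
  | base => exact h_left L le_rfl
  | succ x _ ih => rw [h, ih]

lemma eq_zero_of_label_eq_zero {g : ℤ × ℤ → A} (hg : (Function.support g).Finite)
    (h : label g = 0) : g = 0 := by
  obtain ⟨L, hL⟩ := (hg.image Prod.fst).bddBelow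
  funext ⟨x, y⟩
  refine eq_zero_of_add_one_eq (u := fun x => g (x, y)) (L := L - 1) (fun x hx => ?_)
    (fun x => sub_eq_zero.1 ?_) x
  · by_contra h₀
    have : L ≤ x := hL ⟨(x, y), h₀, rfl⟩
    omega
  · simpa using (label_zero_apply g (x, y)).symm.trans (congrFun h _)

lemma IsCocycle.sub {μ ν : Fin 3 × (ℤ × ℤ) → A} (hμ : IsCocycle μ) (hν : IsCocycle ν) :
    IsCocycle (μ - ν) where
  up v := by simp only [Pi.sub_apply, Finset.sum_sub_distrib, hμ.up, hν.up, sub_self]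
  down w := by simp only [Pi.sub_apply, Finset.sum_sub_distrib, hμ.down, hν.down, sub_self]

lemma IsCocycle.eq_zero_of_horizontal {μ : Fin 3 × (ℤ × ℤ) → A} (hμ : IsCocycle μ)
    (h₀ : ∀ v, μ (0, v) = 0) {L : ℤ} (h_left : ∀ v, v.1 ≤ L → μ (1, v) = 0) : μ = 0 := by
  have h_up (v) : μ (1, v) + μ (2, v) = 0 := by
    simpa only [Fin.sum_univ_three, h₀, zero_add] using hμ.up v
  have h_down (v) : μ (1, v + (1, 0)) + μ (2, v) = 0 := by
    simpa [Fin.sum_univ_three, h₀, corner, show ((0, 0) : ℤ × ℤ) = 0 from rfl] using hμ.down v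
  have h_one (v : ℤ × ℤ) : μ (1, v) = 0 :=
    eq_zero_of_add_one_eq (u := fun x => μ (1, (x, v.2))) (fun x hx => h_left (x, v.2) hx)
      (fun x => by simpa using add_right_cancel ((h_down (x, v.2)).trans (h_up (x, v.2)).symm)) v.1
  funext ⟨k, v⟩
  have h_two := h_up v
  rw [h_one, zero_add] at h_two
  fin_cases k
  exacts [h₀ v, h_one v, h_two]

lemma sum_Ico_add_one_sub_sum_Ico {u : ℤ → A} {a : ℤ} (hu : ∀ i < a, u i = 0) (x : ℤ) :
    ∑ i ∈ Finset.Ico a (x + 1), u i - ∑ i ∈ Finset.Ico a x, u i = u x := by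
  rcases lt_or_ge x a with hx | hx
  · rw [Finset.Ico_eq_empty (by omega), Finset.Ico_eq_empty (by omega), hu x hx, sub_self]
  · rw [← Finset.insert_Ico_right_eq_Ico_add_one hx, Finset.sum_insert Finset.right_notMem_Ico,
      add_sub_cancel_right]

lemma exists_forall_eq_zero_of_finite_support {μ : Fin 3 × (ℤ × ℤ) → A}
    (h_fin : (Function.support μ).Finite) :
    ∃ L : ℤ, ∀ k x y, L ≤ |x| ∨ L ≤ |y| → μ (k, (x, y)) = 0 := by
  obtain ⟨L, hL⟩ := (h_fin.image fun e => max |e.2.1| |e.2.2|).bddAbove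
  refine ⟨L + 1, fun k x y h => ?_⟩
  by_contra h₀
  have : |x| ≤ L ∧ |y| ≤ L := max_le_iff.1 (hL ⟨(k, (x, y)), h₀, rfl⟩)
  omega

lemma finite_support_of_label_eq {D : ℤ × ℤ → A} {L : ℤ} (h_left : ∀ v, v.1 ≤ -L → D v = 0)
    (h_label : ∀ k x y, L ≤ |x| ∨ L ≤ |y| → label D (k, (x, y)) = 0) :
    (Function.support D).Finite := by
  have h_zero (x y) (h : L ≤ |x| ∨ L ≤ |y|) : D (x + 1, y) = D (x, y) := by
    simpa [label_zero_apply, sub_eq_zero] using h_label 0 x y h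
  have h_two (x y) (h : L ≤ |x| ∨ L ≤ |y|) : D (x, y + 1) = D (x + 1, y) := by
    simpa [label_two_apply, sub_eq_zero] using h_label 2 x y h
  have h_rows (x y) (h : L ≤ |y|) : D (x, y) = 0 :=
    eq_zero_of_add_one_eq (u := fun x => D (x, y)) (fun x hx => h_left (x, y) hx)
      (fun x => h_zero x y (.inr h)) x
  have h_right (x y) (hx : L ≤ x) : D (x, y) = 0 := by
    have h (y : ℤ) : L ≤ |x| ∨ L ≤ |y| := .inl (hx.trans (le_abs_self x))
    exact eq_zero_of_add_one_eq (u := fun y => D (x, y)) (L := -L)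
      (fun y hy => h_rows x y (by rw [le_abs]; omega))
      (fun y => (h_two x y (h _)).trans (h_zero x y (h _))) y
  refine (Set.finite_Icc ((-L, -L) : ℤ × ℤ) (L, L)).subset fun v hv => ?_
  by_contra h
  refine hv ?_
  rcases le_or_gt v.1 (-L) with h₁ | h₁
  · exact h_left v h₁
  rcases le_or_gt L v.1 with h₂ | h₂
  · exact h_right _ _ h₂
  refine h_rows _ _ ?_
  simp only [Set.mem_Icc, Prod.le_def] at h
  rw [le_abs]
  omega

-- The potential is obtained by integration along the horizontal lines, starting far to the left.
theorem IsCocycle.exists_potential {μ : Fin 3 × (ℤ × ℤ) → A} (hμ : IsCocycle μ)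
    (h_fin : (Function.support μ).Finite) :
    ∃ D : ℤ × ℤ → A, (Function.support D).Finite ∧ label D = μ := by
  obtain ⟨L, hL⟩ := exists_forall_eq_zero_of_finite_support h_fin
  let D : ℤ × ℤ → A := fun v => ∑ i ∈ Finset.Ico (-L) v.1, μ (0, (i, v.2))
  have h_left (v : ℤ × ℤ) (hv : v.1 ≤ -L) : D v = 0 := by
    simp only [D, Finset.Ico_eq_empty (not_lt.2 hv), Finset.sum_empty]
  have h_zero (v) : label D (0, v) = μ (0, v) := by
    rw [label_zero_apply]
    simpa [D] using sum_Ico_add_one_sub_sum_Ico (u := fun i => μ (0, (i, v.2))) (a := -L)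
      (fun i hi => hL _ _ _ (.inl (by rw [le_abs]; omega))) v.1
  have h_label : label D = μ := by
    refine sub_eq_zero.1 (((isCocycle_label D).sub hμ).eq_zero_of_horizontal (L := -L - 1)
      (fun v => ?_) fun v hv => ?_)
    · rw [Pi.sub_apply, h_zero, sub_self]
    · have : label D (1, v) = 0 := by
        simp only [label, corner]
        rw [h_left _ (by simp; omega), h_left _ (by simp; omega), sub_self]
      rw [Pi.sub_apply, this, hL _ v.1 v.2 (.inl (by rw [le_abs]; omega)), sub_self]
  exact ⟨D, finite_support_of_label_eq h_left fun k x y h => by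
    rw [h_label, hL k x y h], h_label⟩

end Cocycles

section Contraction

variable {A : Type*} [AddCommGroup A]

/-- A set of edges no two of which belong to a common triangle, that is, a matching of upward
triangles with adjacent downward triangles. -/
structure IsTriangleMatching (M : Set (Fin 3 × (ℤ × ℤ))) : Prop where
  up : ∀ ⦃j k v⦄, (j, v) ∈ M → (k, v) ∈ M → j = k
  down : ∀ ⦃j k w⦄, (j, w + corner j) ∈ M → (k, w + corner k) ∈ M → j = k

/-- A cocycle on the subdivision in which every pair of matched triangles is replaced by their
union, a parallelogram, and in which opposite sides of a parallelogram carry equal values. -/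
structure IsContractedCocycle (M : Set (Fin 3 × (ℤ × ℤ))) (c : Fin 3 × (ℤ × ℤ) → A) : Prop where
  up : ∀ v, (∀ k, (k, v) ∉ M) → ∑ j, c (j, v) = 0
  down : ∀ w, (∀ k, (k, w + corner k) ∉ M) → ∑ j, c (j, w + corner j) = 0
  parallel : ∀ k w, (k, w + corner k) ∈ M → ∀ j, c (j, w + corner k) = c (j, w + corner j)

/-- The vertices of the graph whose circulations are the contracted cocycles: the unmatched
triangles, and one vertex between each side of a matched upward triangle and the opposite side of
its parallelogram. -/
inductive ContractedNode
  | up (v : ℤ × ℤ)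
  | down (w : ℤ × ℤ)
  | side (j : Fin 3) (v : ℤ × ℤ)

variable (M : Set (Fin 3 × (ℤ × ℤ)))

/-- The vertex which an edge leaves, on the side of its upward triangle. -/
def edgeTail (e : Fin 3 × (ℤ × ℤ)) : ContractedNode :=
  if ∃ k, (k, e.2) ∈ M then .side e.1 e.2 else .up e.2

/-- The vertex which an edge enters, on the side of its downward triangle. -/
def edgeHead (e : Fin 3 × (ℤ × ℤ)) : ContractedNode :=
  if h : ∃ k, (k, e.2 - corner e.1 + corner k) ∈ M then
    .side e.1 (e.2 - corner e.1 + corner h.choose)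
  else .down (e.2 - corner e.1)

variable {M}

lemma edgeTail_eq_up_iff {e : Fin 3 × (ℤ × ℤ)} {v : ℤ × ℤ} :
    edgeTail M e = .up v ↔ (∀ k, (k, v) ∉ M) ∧ ∃ j, (j, v) = e := by
  obtain ⟨i, u⟩ := e
  unfold edgeTail
  split_ifs with h
  · refine iff_of_false nofun ?_
    rintro ⟨h', j, h_eq⟩
    cases h_eq
    exact h.elim h'
  · rw [ContractedNode.up.injEq]
    refine ⟨?_, fun ⟨_, _, h_eq⟩ => (congrArg Prod.snd h_eq).symm⟩
    rintro rfl
    exact ⟨not_exists.1 h, i, rfl⟩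

lemma edgeTail_eq_side_iff {e : Fin 3 × (ℤ × ℤ)} {j : Fin 3} {v : ℤ × ℤ} :
    edgeTail M e = .side j v ↔ (∃ k, (k, v) ∈ M) ∧ e = (j, v) := by
  obtain ⟨i, u⟩ := e
  unfold edgeTail
  split_ifs with h
  · rw [ContractedNode.side.injEq]
    constructor
    · rintro ⟨rfl, rfl⟩
      exact ⟨h, rfl⟩
    · rintro ⟨-, h_eq⟩
      cases h_eq
      exact ⟨rfl, rfl⟩
  · refine iff_of_false nofun ?_
    rintro ⟨h', h_eq⟩
    cases h_eq
    exact h h'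

lemma edgeTail_ne_down {e : Fin 3 × (ℤ × ℤ)} {w : ℤ × ℤ} : edgeTail M e ≠ .down w := by
  unfold edgeTail
  split_ifs <;> nofun

lemma edgeHead_add_corner_of_mem (hM : IsTriangleMatching M) {k : Fin 3} {w : ℤ × ℤ}
    (hk : (k, w + corner k) ∈ M) (j : Fin 3) :
    edgeHead M (j, w + corner j) = .side j (w + corner k) := by
  have h : ∃ k, (k, w + corner j - corner j + corner k) ∈ M := ⟨k, by rwa [add_sub_cancel_right]⟩
  have h_choose : h.choose = k := hM.down (w := w) (by simpa using h.choose_spec) hk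
  rw [edgeHead, dif_pos h, h_choose, add_sub_cancel_right]

lemma edgeHead_add_corner_of_notMem {w : ℤ × ℤ} (h : ∀ k, (k, w + corner k) ∉ M) (j : Fin 3) :
    edgeHead M (j, w + corner j) = .down w := by
  rw [edgeHead, dif_neg (by simpa using h), add_sub_cancel_right]

lemma edgeHead_eq_down_iff (hM : IsTriangleMatching M) {e : Fin 3 × (ℤ × ℤ)} {w : ℤ × ℤ} :
    edgeHead M e = .down w ↔ (∀ k, (k, w + corner k) ∉ M) ∧ ∃ j, (j, w + corner j) = e := by
  refine ⟨fun h => ?_, ?_⟩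
  · obtain ⟨i, u⟩ := e
    obtain ⟨w, rfl⟩ : ∃ w, u = w + corner i := ⟨u - corner i, by abel⟩
    by_cases h' : ∃ k, (k, w + corner k) ∈ M
    · rw [edgeHead_add_corner_of_mem hM h'.choose_spec] at h
      cases h
    · rw [edgeHead_add_corner_of_notMem (not_exists.1 h')] at h
      cases h
      exact ⟨not_exists.1 h', i, rfl⟩
  · rintro ⟨h, j, rfl⟩
    exact edgeHead_add_corner_of_notMem h j

lemma edgeHead_eq_side_iff (hM : IsTriangleMatching M) {e : Fin 3 × (ℤ × ℤ)} {j : Fin 3}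
    {v : ℤ × ℤ} :
    edgeHead M e = .side j v ↔ ∃ k, (k, v) ∈ M ∧ e = (j, v - corner k + corner j) := by
  refine ⟨fun h => ?_, ?_⟩
  · obtain ⟨i, u⟩ := e
    obtain ⟨w, rfl⟩ : ∃ w, u = w + corner i := ⟨u - corner i, by abel⟩
    by_cases h' : ∃ k, (k, w + corner k) ∈ M
    · obtain ⟨k, hk⟩ := h'
      rw [edgeHead_add_corner_of_mem hM hk] at h
      cases h
      exact ⟨k, hk, by rw [add_sub_cancel_right]⟩
    · rw [edgeHead_add_corner_of_notMem (not_exists.1 h')] at h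
      cases h
  · rintro ⟨k, hk, rfl⟩
    obtain ⟨w, rfl⟩ : ∃ w, v = w + corner k := ⟨v - corner k, by abel⟩
    rw [add_sub_cancel_right]
    exact edgeHead_add_corner_of_mem hM hk j

lemma edgeHead_ne_up {e : Fin 3 × (ℤ × ℤ)} {v : ℤ × ℤ} : edgeHead M e ≠ .up v := by
  unfold edgeHead
  split_ifs <;> nofun

lemma finsum_mem_preimage_eq_sum {E N : Type*} {f : E → N} {n : N} {P : Prop} [Decidable P]
    {ι : Fin 3 → E} (hι : Function.Injective ι) (h : ∀ e, f e = n ↔ P ∧ ∃ j, ι j = e) (c : E → A) :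
    ∑ᶠ e ∈ f ⁻¹' {n}, c e = if P then ∑ j, c (ι j) else 0 := by
  have h_set : f ⁻¹' {n} = {e | P ∧ e ∈ Set.range ι} := Set.ext h
  split_ifs with hP
  · simp only [h_set, hP, true_and, Set.ofPred_mem_eq]
    rw [finsum_mem_range hι, finsum_eq_sum_of_fintype]
  · simp only [h_set, hP, false_and, Set.ofPred_false, finsum_mem_empty]

lemma preimage_edgeTail_side {j k : Fin 3} {w : ℤ × ℤ} (hk : (k, w + corner k) ∈ M) :
    edgeTail M ⁻¹' {.side j (w + corner k)} = {(j, w + corner k)} :=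
  Set.ext fun _ => edgeTail_eq_side_iff.trans (and_iff_right ⟨k, hk⟩)

lemma preimage_edgeHead_side (hM : IsTriangleMatching M) {j k : Fin 3} {w : ℤ × ℤ}
    (hk : (k, w + corner k) ∈ M) :
    edgeHead M ⁻¹' {.side j (w + corner k)} = {(j, w + corner j)} := by
  ext e
  simp only [Set.mem_preimage, Set.mem_singleton_iff, edgeHead_eq_side_iff hM]
  refine ⟨?_, fun h => ⟨k, hk, by rw [h, add_sub_cancel_right]⟩⟩
  rintro ⟨l, hl, h⟩
  rw [h, hM.up hl hk, add_sub_cancel_right]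

lemma preimage_edgeTail_side_of_notMem {j : Fin 3} {v : ℤ × ℤ} (hv : ∀ k, (k, v) ∉ M) :
    edgeTail M ⁻¹' {.side j v} = ∅ :=
  Set.eq_empty_of_forall_notMem fun _ he =>
    let ⟨k, hk⟩ := (edgeTail_eq_side_iff.1 he).1
    hv k hk

lemma preimage_edgeHead_side_of_notMem (hM : IsTriangleMatching M) {j : Fin 3} {v : ℤ × ℤ}
    (hv : ∀ k, (k, v) ∉ M) : edgeHead M ⁻¹' {.side j v} = ∅ :=
  Set.eq_empty_of_forall_notMem fun _ he =>
    let ⟨k, hk, _⟩ := (edgeHead_eq_side_iff hM).1 he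
    hv k hk

lemma isCirculation_iff_isContractedCocycle (hM : IsTriangleMatching M)
    {c : Fin 3 × (ℤ × ℤ) → A} :
    IsCirculation (edgeTail M) (edgeHead M) c ↔ IsContractedCocycle M c := by
  have h_tail_up (v) := finsum_mem_preimage_eq_sum (ι := fun j => (j, v))
    (fun _ _ h => congrArg Prod.fst h) (fun e => edgeTail_eq_up_iff (M := M)) c
  have h_head_up (v) : edgeHead M ⁻¹' {.up v} = ∅ :=
    Set.eq_empty_of_forall_notMem fun _ => edgeHead_ne_up
  have h_tail_down (w) : edgeTail M ⁻¹' {.down w} = ∅ :=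
    Set.eq_empty_of_forall_notMem fun _ => edgeTail_ne_down
  have h_head_down (w) := finsum_mem_preimage_eq_sum (ι := fun j => (j, w + corner j))
    (fun _ _ h => congrArg Prod.fst h) (fun e => edgeHead_eq_down_iff hM) c
  refine ⟨fun h => ⟨fun v hv => ?_, fun w hw => ?_, fun k w hk j => ?_⟩, fun h n => ?_⟩
  · have := h (.up v)
    rwa [h_tail_up, if_pos hv, h_head_up, finsum_mem_empty] at this
  · have := h (.down w)
    rwa [h_head_down, if_pos hw, h_tail_down, finsum_mem_empty, eq_comm] at this
  · have := h (.side j (w + corner k))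
    rwa [preimage_edgeTail_side hk, preimage_edgeHead_side hM hk, finsum_mem_singleton,
      finsum_mem_singleton] at this
  · cases n with
    | up v =>
      rw [h_tail_up, h_head_up, finsum_mem_empty, ite_eq_right_iff]
      exact h.up v
    | down w =>
      rw [h_head_down, h_tail_down, finsum_mem_empty, eq_comm, ite_eq_right_iff]
      exact h.down w
    | side j v =>
      by_cases hv : ∃ k, (k, v) ∈ M
      · obtain ⟨k, hk⟩ := hv
        obtain ⟨w, rfl⟩ : ∃ w, v = w + corner k := ⟨v - corner k, by abel⟩
        rw [preimage_edgeTail_side hk, preimage_edgeHead_side hM hk, finsum_mem_singleton,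
          finsum_mem_singleton]
        exact h.parallel k w hk j
      · rw [preimage_edgeTail_side_of_notMem (not_exists.1 hv),
          preimage_edgeHead_side_of_notMem hM (not_exists.1 hv)]

theorem IsContractedCocycle.exists_real (hM : IsTriangleMatching M) {c : Fin 3 × (ℤ × ℤ) → A}
    (hc : IsContractedCocycle M c) (h₀ : c ≠ 0) (h_fin : (Function.support c).Finite) :
    ∃ r : Fin 3 × (ℤ × ℤ) → ℝ,
      r ≠ 0 ∧ Function.support r ⊆ Function.support c ∧ IsContractedCocycle M r := by
  simp only [← isCirculation_iff_isContractedCocycle hM] at hc ⊢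
  exact hc.exists_real h₀ h_fin

end Contraction

section Rigidity

variable {A : Type*} [AddCommGroup A] {M : Set (Fin 3 × (ℤ × ℤ))}
  {T : Set ((ℤ × ℤ) × (ℤ × ℤ))}

/-- The short diagonals of a set of rhombi, as edges of the lattice. -/
def shortDiagonals (T : Set ((ℤ × ℤ) × (ℤ × ℤ))) : Set (Fin 3 × (ℤ × ℤ)) :=
  {e | (e.2 + corner e.1, corner (e.1 + 2) - corner e.1) ∈ T}

lemma eq_or_eq_add_one_or (j k : Fin 3) : j = k ∨ j = k + 1 ∨ j = k + 2 := by
  decide +revert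

lemma add_one_add_one (k : Fin 3) : k + 1 + 1 = k + 2 := by decide +revert

lemma add_one_add_two (k : Fin 3) : k + 1 + 2 = k := by decide +revert

lemma add_two_add_one (k : Fin 3) : k + 2 + 1 = k := by decide +revert

lemma add_two_add_two (k : Fin 3) : k + 2 + 2 = k + 1 := by decide +revert

lemma rot_corner_sub (k : Fin 3) :
    rot (corner (k + 2) - corner k) = corner (k + 1) - corner k := by
  fin_cases k <;> decide

lemma exists_eq_corner_sub_or {d : ℤ × ℤ} (hd : hexNorm d = 1) :
    ∃ k : Fin 3, corner (k + 2) - corner k = d ∨ corner (k + 2) - corner k = -d := by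
  rw [hexNorm_eq_one_iff] at hd
  rcases hd with rfl | rfl | rfl | rfl | rfl | rfl <;> decide

lemma slack_corner (g : ℤ × ℤ → A) (k : Fin 3) (w : ℤ × ℤ) :
    slack g (w + corner k + corner k) (corner (k + 2) - corner k) =
      label g (k + 1, w + corner k) - label g (k + 1, w + corner (k + 1)) := by
  simp only [slack, label, rot_corner_sub, add_one_add_one, add_one_add_two]
  abel_nf

lemma IsCocycle.label_sub_add_label_sub {μ : Fin 3 × (ℤ × ℤ) → A} (hμ : IsCocycle μ) (k : Fin 3)
    (w : ℤ × ℤ) : (μ (k + 1, w + corner k) - μ (k + 1, w + corner (k + 1))) +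
      (μ (k + 2, w + corner k) - μ (k + 2, w + corner (k + 2))) = 0 := by
  have h_sum (u : Fin 3 → A) : ∑ j, u j = u k + (u (k + 1) + u (k + 2)) := by
    rw [Fin.sum_univ_three]
    fin_cases k <;> simp <;> abel
  have h_up := h_sum (fun j => μ (j, w + corner k)) ▸ hμ.up (w + corner k)
  have h_down := h_sum (fun j => μ (j, w + corner j)) ▸ hμ.down w
  rw [← sub_eq_zero.2 (h_up.trans h_down.symm)]
  abel

lemma IsRhombusPacking.notMem_shortDiagonals_up (hT : IsRhombusPacking T) {k : Fin 3} {v : ℤ × ℤ}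
    (hk : (k, v) ∈ shortDiagonals T) : (k + 2, v) ∉ shortDiagonals T := by
  have := hT.notMem_of_mem hk
  rwa [rot_rot, rot_corner_sub, sub_sub_sub_cancel_right, add_assoc, add_sub_cancel,
    ← add_two_add_two] at this

lemma IsRhombusPacking.notMem_shortDiagonals_down (hT : IsRhombusPacking T) {k : Fin 3}
    {w : ℤ × ℤ} (hk : (k, w + corner k) ∈ shortDiagonals T) :
    (k + 2, w + corner (k + 2)) ∉ shortDiagonals T := by
  intro h
  refine hT.notMem_of_mem (hT.opposite_mem hk) ?_
  convert hT.opposite_mem h using 2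
  · dsimp only
    rw [rot_corner_sub, rot_corner_sub, add_two_add_one, add_two_add_two]
    abel
  · rw [map_neg, map_neg, rot_rot, rot_corner_sub, add_two_add_two]
    abel

lemma IsRhombusPacking.isTriangleMatching (hT : IsRhombusPacking T) :
    IsTriangleMatching (shortDiagonals T) where
  up j k v hj hk := by
    rcases eq_or_eq_add_one_or j k with h | rfl | rfl
    · exact h
    · exact absurd hk (add_one_add_two k ▸ hT.notMem_shortDiagonals_up hj)
    · exact absurd hj (hT.notMem_shortDiagonals_up hk)
  down j k w hj hk := by
    rcases eq_or_eq_add_one_or j k with h | rfl | rfl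
    · exact h
    · exact absurd hk (add_one_add_two k ▸ hT.notMem_shortDiagonals_down hj)
    · exact absurd hj (hT.notMem_shortDiagonals_down hk)

lemma IsTriangleMatching.notMem_of_ne (hM : IsTriangleMatching M) {j k : Fin 3} {w : ℤ × ℤ}
    (hk : (k, w + corner k) ∈ M) (hj : j ≠ k) :
    (j, w + corner k) ∉ M ∧ (j, w + corner j) ∉ M :=
  ⟨fun h => hj (hM.up h hk), fun h => hj (hM.down h hk)⟩

/-- The contraction of a function on the edges along a set of edges. -/
def contract (M : Set (Fin 3 × (ℤ × ℤ))) (μ : Fin 3 × (ℤ × ℤ) → A) (e : Fin 3 × (ℤ × ℤ)) : A :=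
  if e ∈ M then 0 else μ e

lemma isContractedCocycle_contract (hM : IsTriangleMatching M) {μ : Fin 3 × (ℤ × ℤ) → A}
    (hμ : IsCocycle μ)
    (h_par : ∀ k w, (k, w + corner k) ∈ M →
      μ (k + 1, w + corner k) = μ (k + 1, w + corner (k + 1))) :
    IsContractedCocycle M (contract M μ) where
  up v hv := by simpa only [contract, if_neg (hv _)] using hμ.up v
  down w hw := by simpa only [contract, if_neg (hw _)] using hμ.down w
  parallel k w hk j := by
    by_cases hj : j = k
    · rw [hj]
    obtain ⟨h, h'⟩ := hM.notMem_of_ne hk hj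
    rw [contract, contract, if_neg h, if_neg h']
    have h_one := h_par k w hk
    have h_sub := hμ.label_sub_add_label_sub k w
    rw [h_one, sub_self, zero_add, sub_eq_zero] at h_sub
    obtain rfl | rfl := (eq_or_eq_add_one_or j k).resolve_left hj
    exacts [h_one, h_sub]

/-- The inverse of `contract` on cocycles: the value on a contracted edge is recovered from the
upward triangle that contains it. -/
def expand (M : Set (Fin 3 × (ℤ × ℤ))) (c : Fin 3 × (ℤ × ℤ) → A) (e : Fin 3 × (ℤ × ℤ)) : A :=
  c e - if e ∈ M then ∑ j, c (j, e.2) else 0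

lemma IsContractedCocycle.isCocycle_expand (hM : IsTriangleMatching M)
    {c : Fin 3 × (ℤ × ℤ) → A} (hc : IsContractedCocycle M c) : IsCocycle (expand M c) where
  up v := by
    simp only [expand, Finset.sum_sub_distrib]
    by_cases h : ∃ k, (k, v) ∈ M
    · obtain ⟨k, hk⟩ := h
      rw [Finset.sum_eq_single k (fun j _ hj => if_neg fun h => hj (hM.up h hk)) (by simp),
        if_pos hk, sub_self]
    · push Not at h
      simp only [h, if_false, hc.up v h, Finset.sum_const_zero, sub_zero]
  down w := by
    simp only [expand, Finset.sum_sub_distrib]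
    by_cases h : ∃ k, (k, w + corner k) ∈ M
    · obtain ⟨k, hk⟩ := h
      rw [Finset.sum_eq_single k (fun j _ hj => if_neg fun h => hj (hM.down h hk)) (by simp),
        if_pos hk, sub_eq_zero]
      exact Finset.sum_congr rfl fun j _ => (hc.parallel k w hk j).symm
    · push Not at h
      simp only [h, if_false, hc.down w h, Finset.sum_const_zero, sub_zero]

lemma IsCocycle.expand_contract (hM : IsTriangleMatching M) {μ : Fin 3 × (ℤ × ℤ) → A}
    (hμ : IsCocycle μ) : expand M (contract M μ) = μ := by
  funext ⟨k, v⟩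
  by_cases hk : (k, v) ∈ M
  · have h_sum := hμ.up v
    rw [← Finset.add_sum_erase _ _ (Finset.mem_univ k)] at h_sum
    rw [expand, if_pos hk, ← Finset.add_sum_erase _ _ (Finset.mem_univ k), contract, if_pos hk,
      zero_add, zero_sub, neg_eq_of_add_eq_zero_left]
    rw [← h_sum]
    exact congrArg _ (Finset.sum_congr rfl fun j hj => if_neg fun h =>
      (Finset.mem_erase.1 hj).1 (hM.up h hk))
  · rw [expand, if_neg hk, contract, if_neg hk, sub_zero]

lemma IsContractedCocycle.expand_parallel (hM : IsTriangleMatching M)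
    {c : Fin 3 × (ℤ × ℤ) → A} (hc : IsContractedCocycle M c) {j k : Fin 3} {w : ℤ × ℤ}
    (hk : (k, w + corner k) ∈ M) (hj : j ≠ k) :
    expand M c (j, w + corner k) = expand M c (j, w + corner j) := by
  obtain ⟨h, h'⟩ := hM.notMem_of_ne hk hj
  rw [expand, expand, if_neg h, if_neg h', hc.parallel k w hk j]

end Rigidity

lemma exists_notMem_support_of_finite {A : Type*} [Zero A] {u : ℤ × ℤ → A}
    (hu : (Function.support u).Finite) (v : ℤ × ℤ) {e : ℤ × ℤ} (he : e ≠ 0) :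
    ∃ n : ℕ, u (v + n • e) = 0 := by
  by_contra! h
  refine Set.infinite_range_of_injective (f := fun n : ℕ => v + (n : ℤ) • e)
    ((add_right_injective v).comp ((smul_left_injective ℤ he).comp Nat.cast_injective))
    (hu.subset (Set.range_subset_iff.2 fun n => ?_))
  simpa only [Function.mem_support, natCast_zsmul] using h n

lemma eq_zero_of_forall_add_smul_eq {A : Type*} [Zero A] {u : ℤ × ℤ → A}
    (hu : (Function.support u).Finite) {v e : ℤ × ℤ} (he : e ≠ 0)
    (h : ∀ n : ℕ, u (v + (n + 1) • e) = u (v + n • e)) : u v = 0 := by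
  obtain ⟨n, hn⟩ := exists_notMem_support_of_finite hu v he
  have h_ray (n : ℕ) : u (v + n • e) = u v := by
    induction n with
    | zero => rw [zero_smul, add_zero]
    | succ n ih => rw [h, ih]
  rw [← h_ray n, hn]

lemma IsDiscretelyConvex.add_smul_mem {I : Set (ℤ × ℤ)} (hI : IsDiscretelyConvex I) {e : ℤ × ℤ}
    (he : hexNorm e ≤ 1) {n : ℕ} {v : ℤ × ℤ} (hv : v ∈ I) (hvn : v + n • e ∈ I) {k : ℕ}
    (hk : k ≤ n) : v + k • e ∈ I := by
  induction n using Nat.strong_induction_on generalizing v k with | _ n ih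
  rcases Nat.lt_or_ge n 2 with hn | hn
  · obtain rfl | rfl : k = 0 ∨ k = n := by omega
    · simpa using hv
    · exact hvn
  obtain ⟨a, b, hab, hb⟩ : ∃ a b, a + b = n ∧ (b = a ∨ b = a + 1) := ⟨n / 2, n - n / 2, by omega⟩
  have h_sum : v + a • e + (v + b • e) = v + (v + n • e) := by rw [← hab, add_smul]; abel
  have h_near : hexNorm (v + a • e - (v + b • e)) ≤ 1 := by
    rcases hb with rfl | rfl
    · rw [sub_self]; decide
    · rwa [hexNorm_sub_comm, add_sub_add_left_eq_sub, succ_nsmul, add_sub_cancel_left]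
  have ha_mem := hI hv hvn h_sum h_near
  rcases le_total k a with hka | hka
  · exact ih a (by omega) hv ha_mem hka
  · have := ih b (by omega) (v := v + a • e) (k := k - a) ha_mem
      (by rwa [add_assoc, ← add_smul, hab]) (by omega)
    rwa [add_assoc, ← add_smul, Nat.add_sub_cancel' hka] at this

section Transfer

variable {A : Type*} [AddCommGroup A] {I : Finset (ℤ × ℤ)} {M : Set (Fin 3 × (ℤ × ℤ))}
  {T : Set ((ℤ × ℤ) × (ℤ × ℤ))}

/-- A function on the edges supported in the edges with an endpoint in `I`. -/
def IsLocalized (I : Finset (ℤ × ℤ)) (μ : Fin 3 × (ℤ × ℤ) → A) : Prop :=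
  ∀ k v, v + corner (k + 1) ∉ I → v + corner (k + 2) ∉ I → μ (k, v) = 0

lemma isLocalized_label {D : ℤ × ℤ → A} (hD : ∀ v ∉ I, D v = 0) : IsLocalized I (label D) :=
  fun k v h h' => by rw [label, hD _ h, hD _ h', sub_self]

lemma IsLocalized.finite_support {μ : Fin 3 × (ℤ × ℤ) → A} (hμ : IsLocalized I μ) :
    (Function.support μ).Finite := by
  have h_fin (ι : Fin 3 → Fin 3) : {e : Fin 3 × (ℤ × ℤ) | e.2 + corner (ι e.1) ∈ I}.Finite :=
    ((Set.finite_univ.prod I.finite_toSet).image fun x => (x.1, x.2 - corner (ι x.1))).subset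
      fun e he => ⟨(e.1, e.2 + corner (ι e.1)), ⟨trivial, he⟩, by simp⟩
  refine ((h_fin (· + 1)).union (h_fin (· + 2))).subset fun e he => ?_
  by_contra h
  exact he (hμ e.1 e.2 (fun h₁ => h (.inl h₁)) fun h₂ => h (.inr h₂))

lemma IsLocalized.mono {B : Type*} [AddCommGroup B] {μ : Fin 3 × (ℤ × ℤ) → A}
    {ν : Fin 3 × (ℤ × ℤ) → B} (hμ : IsLocalized I μ)
    (h : Function.support ν ⊆ Function.support μ) : IsLocalized I ν :=
  fun k v h₁ h₂ => by_contra fun h' => h h' (hμ k v h₁ h₂)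

-- By discrete convexity, one of the triangles next to a diagonal outside `I` lies outside `I`.
lemma IsLocalized.expand (hI : IsDiscretelyConvex (I : Set (ℤ × ℤ))) {c : Fin 3 × (ℤ × ℤ) → A}
    (hc : IsContractedCocycle M c) (h_loc : IsLocalized I c) : IsLocalized I (expand M c) := by
  intro k v h₁ h₂
  rw [_root_.expand, h_loc k v h₁ h₂, zero_sub, neg_eq_zero, ite_eq_right_iff]
  intro hk
  obtain ⟨w, rfl⟩ : ∃ w, v = w + corner k := ⟨v - corner k, by abel⟩
  have h_acute : w + corner k + corner k ∉ I ∨ w + corner (k + 1) + corner (k + 2) ∉ I := by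
    refine hI.notMem_or_notMem h₁ (le_of_eq ?_)
    rw [show w + corner k + corner k + (w + corner (k + 1) + corner (k + 2)) -
      (w + corner k + corner (k + 1)) - (w + corner k + corner (k + 1)) =
        corner (k + 2) - corner (k + 1) by abel]
    fin_cases k <;> decide
  rcases h_acute with h₀ | h₀
  · have h_up (i) : w + corner k + corner i ∉ I := by
      obtain rfl | rfl | rfl := eq_or_eq_add_one_or i k
      exacts [h₀, h₁, h₂]
    exact Finset.sum_eq_zero fun j _ => h_loc j _ (h_up _) (h_up _)
  · have h_down (i) : w + corner i + corner (i + 1) ∉ I := by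
      obtain rfl | rfl | rfl := eq_or_eq_add_one_or i k
      · exact h₁
      · rwa [add_one_add_one]
      · rwa [add_two_add_one, add_right_comm]
    rw [Finset.sum_congr rfl fun j _ => hc.parallel k w hk j]
    refine Finset.sum_eq_zero fun j _ => h_loc j _ (h_down j) ?_
    have h := h_down (j + 2)
    rwa [add_two_add_one, add_right_comm] at h

lemma eq_zero_of_isLocalized_label (hI : IsDiscretelyConvex (I : Set (ℤ × ℤ))) {D : ℤ × ℤ → A}
    (hD : (Function.support D).Finite) (h_loc : IsLocalized I (label D)) {v : ℤ × ℤ}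
    (hv : v ∉ I) : D v = 0 := by
  let e : ℤ × ℤ := (1, 0)
  have h_step {u} (h : u + e ∉ I) (h' : u ∉ I) : D (u + e) = D u := by
    refine sub_eq_zero.1 ((label_zero_apply D u).symm.trans (h_loc 0 u h ?_))
    rwa [show corner (0 + 2) = 0 from rfl, add_zero]
  by_cases h_right : ∀ n : ℕ, v + n • e ∉ I
  · refine eq_zero_of_forall_add_smul_eq hD (show e ≠ 0 by decide) fun n => ?_
    have h_eq : v + (n + 1) • e = v + n • e + e := by rw [succ_nsmul, add_assoc]
    rw [h_eq, h_step (h_eq ▸ h_right (n + 1)) (h_right n)]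
  · push Not at h_right
    obtain ⟨m, hm⟩ := h_right
    have h_left (n : ℕ) : v + n • -e ∉ I := fun hn => hv <| by
      have h_eq : v + n • -e + (n + m) • e = v + m • e := by rw [add_smul, smul_neg]; abel
      have := hI.add_smul_mem (e := e) (by decide) hn (h_eq ▸ hm) (Nat.le_add_right n m)
      simpa using this
    refine eq_zero_of_forall_add_smul_eq hD (show -e ≠ 0 by decide) fun n => ?_
    have h_eq : v + (n + 1) • -e + e = v + n • -e := by rw [succ_nsmul]; abel
    rw [← h_eq, h_step (h_eq ▸ h_left n) (h_left (n + 1))]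

lemma slack_eq_zero_of_mem (hT : IsRhombusPacking T) {g : ℤ × ℤ → A}
    (h : ∀ k w, (k, w + corner k) ∈ shortDiagonals T →
      label g (k + 1, w + corner k) = label g (k + 1, w + corner (k + 1)))
    {p d : ℤ × ℤ} (hpd : (p, d) ∈ T) : slack g p d = 0 := by
  have h_main {p k} (hp : (p, corner (k + 2) - corner k) ∈ T) :
      slack g p (corner (k + 2) - corner k) = 0 := by
    obtain ⟨w, rfl⟩ : ∃ w, p = w + corner k + corner k := ⟨p - corner k - corner k, by abel⟩
    rw [slack_corner, h k w hp, sub_self]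
  obtain ⟨k, rfl | hk⟩ := exists_eq_corner_sub_or (hT.hexNorm_eq_one hpd)
  · exact h_main hpd
  · rw [← slack_opposite, ← hk]
    exact h_main (hk ▸ hT.opposite_mem hpd)

lemma IsRigid.eq_zero_of_isContractedCocycle (h_rigid : IsRigid A I T)
    (hI : IsDiscretelyConvex (I : Set (ℤ × ℤ))) (hT : IsRhombusPacking T)
    {c : Fin 3 × (ℤ × ℤ) → A} (hc : IsContractedCocycle (shortDiagonals T) c)
    (h_loc : IsLocalized I c) (h_zero : ∀ e ∈ shortDiagonals T, c e = 0) : c = 0 := by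
  have hM := hT.isTriangleMatching
  have h_loc' := h_loc.expand hI hc
  obtain ⟨D, hD_fin, hD⟩ := (hc.isCocycle_expand hM).exists_potential h_loc'.finite_support
  have hD_zero : D = 0 := h_rigid D (fun v hv =>
    eq_zero_of_isLocalized_label hI hD_fin (hD ▸ h_loc') hv) fun p d hpd =>
      slack_eq_zero_of_mem hT (fun k w hk => by
        rw [hD, hc.expand_parallel hM hk (by fin_cases k <;> decide)]) hpd
  funext e
  by_cases he : e ∈ shortDiagonals T
  · exact h_zero e he
  · have h_e : expand (shortDiagonals T) c e = 0 := by
      rw [← hD, hD_zero]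
      exact sub_self _
    rwa [expand, if_neg he, sub_zero] at h_e

theorem IsRigid.of_real (hI : IsDiscretelyConvex (I : Set (ℤ × ℤ))) (hT : IsRhombusPacking T)
    (h_rigid : IsRigid ℝ I T) : IsRigid A I T := by
  intro D hD h_flat
  by_contra h₀
  have hM := hT.isTriangleMatching
  have h_coc := isCocycle_label D
  have h_fin : (Function.support D).Finite := I.finite_toSet.subset fun v hv =>
    by_contra fun h => hv (hD v h)
  set c := contract (shortDiagonals T) (label D)
  have h_expand : expand (shortDiagonals T) c = label D := h_coc.expand_contract hM
  have hc : IsContractedCocycle (shortDiagonals T) c :=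
    isContractedCocycle_contract hM h_coc fun k w hk => by
      rw [← sub_eq_zero, ← slack_corner, h_flat _ _ hk]
  have hc₀ : c ≠ 0 := fun h => h₀ <| eq_zero_of_label_eq_zero h_fin <| by
    rw [← h_expand, h]
    funext e
    simp [expand]
  have h_supp : Function.support c ⊆ Function.support (label D) := fun e he h => he <| by
    simp only [c, contract, h, ite_self]
  have h_loc : IsLocalized I c := (isLocalized_label hD).mono h_supp
  obtain ⟨r, hr₀, hr_supp, hr⟩ := hc.exists_real hM hc₀ h_loc.finite_support
  exact hr₀ <| h_rigid.eq_zero_of_isContractedCocycle hI hT hr (h_loc.mono hr_supp) fun e he =>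
    by_contra fun h => hr_supp h (if_pos he)

end Transfer

lemma coe_unitAddCircle_eq_zero_iff {x : ℝ} : (x : UnitAddCircle) = 0 ↔ ∃ n : ℤ, x = n := by
  rw [AddCircle.coe_eq_zero_iff]
  simp only [zsmul_one, eq_comm]

theorem IsHive.exists_integral {I : Finset (ℤ × ℤ)} (hI : IsDiscretelyConvex (I : Set (ℤ × ℤ)))
    {f : ℤ × ℤ → ℝ} (hf : IsHive f) (h_int : ∀ v ∉ I, (f v : UnitAddCircle) = 0) :
    ∃ g ∈ hivesExtending I f, ∀ v, (g v : UnitAddCircle) = 0 := by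
  obtain ⟨g, hg, T, hT_flat, hT, h_rigid⟩ := hf.exists_rigid_packing hI
  have h_zero : (fun v => (g v : UnitAddCircle)) = 0 := by
    refine h_rigid.of_real hI hT _ (fun v hv => by rw [hg.2 v hv, h_int v hv]) fun p d hpd => ?_
    exact congrArg (fun x : ℝ => (x : UnitAddCircle)) (hT_flat hpd).2
  exact ⟨g, hg, congrFun h_zero⟩

section Extension

/-- Discrete concavity of `g` on `R`: values at `p` and `q` average to at most the average over
lattice points next to the midpoint of `p` and `q`. -/
def IsDiscretelyConcaveOn (R : Set (ℤ × ℤ)) (g : ℤ × ℤ → ℝ) : Prop :=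
  ∀ ⦃p⦄, p ∈ R → ∀ ⦃q⦄, q ∈ R → ∀ ⦃a b⦄, a + b = p + q → hexNorm (a - b) ≤ 1 → g p + g q ≤ g a + g b

lemma hexNorm_eq (v : ℤ × ℤ) : hexNorm v = v.1 ∨ hexNorm v = -v.1 ∨ hexNorm v = v.2 ∨
    hexNorm v = -v.2 ∨ hexNorm v = v.1 + v.2 ∨ hexNorm v = -(v.1 + v.2) := by
  unfold hexNorm
  rcases max_choice (max |v.1| |v.2|) |v.1 + v.2| with h | h <;> rw [h]
  · rcases max_choice |v.1| |v.2| with h | h <;> rw [h]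
    · rcases abs_choice v.1 with h | h <;> simp [h]
    · rcases abs_choice v.2 with h | h <;> simp [h]
  · rcases abs_choice (v.1 + v.2) with h | h <;> rw [h] <;> simp

lemma hexNorm_add_le (u v : ℤ × ℤ) : hexNorm (u + v) ≤ hexNorm u + hexNorm v := by
  have hu := hexNorm_le_iff.1 (le_refl (hexNorm u))
  have hv := hexNorm_le_iff.1 (le_refl (hexNorm v))
  rw [hexNorm_le_iff, Prod.fst_add, Prod.snd_add]
  omega

-- A functional attaining one of the norms misses the other by at most one.
lemma hexNorm_add_hexNorm_le {a b : ℤ × ℤ} (h : hexNorm (a - b) ≤ 1) :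
    hexNorm a + hexNorm b ≤ hexNorm (a + b) := by
  have ha := hexNorm_le_iff.1 (le_refl (hexNorm a))
  have hb := hexNorm_le_iff.1 (le_refl (hexNorm b))
  have hab := hexNorm_le_iff.1 (le_refl (hexNorm (a + b)))
  rw [hexNorm_le_iff, Prod.fst_sub, Prod.snd_sub] at h
  rw [Prod.fst_add, Prod.snd_add] at hab
  rcases hexNorm_eq a with h₁ | h₁ | h₁ | h₁ | h₁ | h₁ <;>
    rcases hexNorm_eq b with h₂ | h₂ | h₂ | h₂ | h₂ | h₂ <;> omega

lemma exists_add_eq_of_hexNorm_sub_le_one (s : ℤ × ℤ) :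
    ∃ a b : ℤ × ℤ, a + b = s ∧ hexNorm (a - b) ≤ 1 := by
  refine ⟨((s.1 + 1) / 2, s.2 / 2), (s.1 - (s.1 + 1) / 2, s.2 - s.2 / 2), by ext <;> simp, ?_⟩
  simp only [hexNorm_le_iff, Prod.mk_sub_mk]
  omega

lemma hexNorm_sub_le_one_or_hexNorm_add_le_one {d e : ℤ × ℤ} (hd : hexNorm d ≤ 1)
    (he : hexNorm e ≤ 1) : hexNorm (d - e) ≤ 1 ∨ hexNorm (d + e) ≤ 1 := by
  simp only [hexNorm_le_iff, Prod.fst_add, Prod.snd_add, Prod.fst_sub, Prod.snd_sub] at *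
  omega

lemma exists_hexNorm_sub_lt {v : ℤ × ℤ} (hv : v ≠ 0) :
    ∃ d, hexNorm d = 1 ∧ hexNorm (v - d) < hexNorm v := by
  have h := hexNorm_le_iff.1 (le_refl (hexNorm v))
  have h_cones : (1 ≤ v.1 ∧ 0 ≤ v.2) ∨ (v.1 ≤ 0 ∧ 1 ≤ v.1 + v.2) ∨ (1 ≤ v.2 ∧ v.1 + v.2 ≤ 0) ∨
      (v.1 ≤ -1 ∧ v.2 ≤ 0) ∨ (0 ≤ v.1 ∧ v.1 + v.2 ≤ -1) ∨ (v.2 ≤ -1 ∧ 0 ≤ v.1 + v.2) := by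
    have : ¬ (v.1 = 0 ∧ v.2 = 0) := fun h => hv (Prod.ext h.1 h.2)
    omega
  simp only [hexNorm_eq_one_iff, ← Int.le_sub_one_iff, hexNorm_le_iff]
  rcases h_cones with h' | h' | h' | h' | h' | h'
  · exact ⟨(1, 0), by simp, by simp; omega⟩
  · exact ⟨(0, 1), by simp, by simp; omega⟩
  · exact ⟨(-1, 1), by simp, by simp; omega⟩
  · exact ⟨(-1, 0), by simp, by simp; omega⟩
  · exact ⟨(0, -1), by simp, by simp; omega⟩
  · exact ⟨(1, -1), by simp, by simp; omega⟩

/-- The extension of `g : R → ℝ` to the lattice that decreases with slope `N` away from `R`. -/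
def coneExtension (R : Finset (ℤ × ℤ)) (hR : R.Nonempty) (g : ℤ × ℤ → ℝ) (N : ℤ) (v : ℤ × ℤ) : ℝ :=
  R.sup' hR fun u => g u - N * hexNorm (v - u)

variable {R : Finset (ℤ × ℤ)} (hR : R.Nonempty) {g : ℤ × ℤ → ℝ} {N : ℤ}

lemma le_coneExtension {u : ℤ × ℤ} (hu : u ∈ R) (v : ℤ × ℤ) :
    g u - N * hexNorm (v - u) ≤ coneExtension R hR g N v :=
  Finset.le_sup' (fun u => g u - N * hexNorm (v - u)) hu

lemma exists_coneExtension_eq (g : ℤ × ℤ → ℝ) (N : ℤ) (v : ℤ × ℤ) :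
    ∃ u ∈ R, coneExtension R hR g N v = g u - N * hexNorm (v - u) :=
  Finset.exists_mem_eq_sup' hR _

lemma coneExtension_of_mem (hN : ∀ u ∈ R, ∀ v ∈ R, g u - g v < N) {v : ℤ × ℤ} (hv : v ∈ R) :
    coneExtension R hR g N v = g v := by
  refine le_antisymm (Finset.sup'_le hR _ fun u hu => ?_) ?_
  · rcases eq_or_ne u v with rfl | huv
    · simp [hexNorm]
    have h_norm : (1 : ℝ) ≤ hexNorm (v - u) := by
      have h₀ := (hexNorm_nonneg (v - u)).lt_of_ne'
        (mt hexNorm_eq_zero_iff.1 (sub_ne_zero.2 huv.symm))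
      exact_mod_cast h₀
    nlinarith [hN u hu v hv, hN v hv v hv]
  · simpa [hexNorm] using le_coneExtension hR (g := g) (N := N) hv v

lemma IsDiscretelyConcaveOn.coneExtension (hN : 0 ≤ N)
    (h_conv : IsDiscretelyConvex (R : Set (ℤ × ℤ))) (hg : IsDiscretelyConcaveOn R g) :
    IsDiscretelyConcaveOn Set.univ (coneExtension R hR g N) := by
  intro p _ q _ a b hab h_near
  obtain ⟨u, hu, h_p⟩ := exists_coneExtension_eq hR g N p
  obtain ⟨v, hv, h_q⟩ := exists_coneExtension_eq hR g N q
  obtain ⟨w, x, hwx, hwx_near, h_close⟩ : ∃ w x, w + x = u + v ∧ hexNorm (w - x) ≤ 1 ∧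
      hexNorm ((a - w) - (b - x)) ≤ 1 := by
    obtain ⟨w, x, hwx, hwx_near⟩ := exists_add_eq_of_hexNorm_sub_le_one (u + v)
    rcases hexNorm_sub_le_one_or_hexNorm_add_le_one h_near hwx_near with h | h
    · exact ⟨w, x, hwx, hwx_near, by rwa [sub_sub_sub_comm]⟩
    · refine ⟨x, w, by rwa [add_comm], by rwa [hexNorm_sub_comm], ?_⟩
      rwa [sub_sub_sub_comm, ← neg_sub w x, sub_neg_eq_add]
  have h_norm : hexNorm (a - w) + hexNorm (b - x) ≤ hexNorm (p - u) + hexNorm (q - v) := by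
    refine (hexNorm_add_hexNorm_le h_close).trans ?_
    rw [sub_add_sub_comm, hab, hwx, ← sub_add_sub_comm]
    exact hexNorm_add_le _ _
  have h_norm' : (hexNorm (a - w) + hexNorm (b - x) : ℝ) ≤ hexNorm (p - u) + hexNorm (q - v) := by
    exact_mod_cast h_norm
  have h_mul := mul_le_mul_of_nonneg_left h_norm' (Int.cast_nonneg (R := ℝ) hN)
  have h_w := le_coneExtension hR (g := g) (N := N) (h_conv hu hv hwx hwx_near) a
  have h_x := le_coneExtension hR (g := g) (N := N)
    (h_conv hu hv ((add_comm x w).trans hwx) (by rwa [hexNorm_sub_comm])) b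
  have h_g := hg hu hv hwx hwx_near
  rw [h_p, h_q]
  linarith

lemma IsDiscretelyConcaveOn.isHive {f : ℤ × ℤ → ℝ} (hf : IsDiscretelyConcaveOn Set.univ f) :
    IsHive f := fun p d hd => by
  have h_near : hexNorm (p + d - (p + rot d)) ≤ 1 := by
    rw [add_sub_add_left_eq_sub, hexNorm_sub_comm, ← rot_rot, hexNorm_rot, hexNorm_rot, hd]
  have := hf (Set.mem_univ p) (Set.mem_univ (p + d + rot d))
    (by rw [← add_assoc, add_comm _ p]; abel) h_near
  rw [slack]
  linarith

-- Outside `R`, the maximum in `coneExtension` is attained at a point of `R` with a neighbour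
-- outside `R`: from any other point one can step towards `v` and gain `N`.
lemma coe_coneExtension_eq_zero (hN : ∀ u ∈ R, ∀ v ∈ R, g u - g v < N)
    (hg : ∀ u ∈ R, ∀ d, hexNorm d = 1 → u + d ∉ R → (g u : UnitAddCircle) = 0) {v : ℤ × ℤ}
    (hv : v ∉ R) : (coneExtension R hR g N v : UnitAddCircle) = 0 := by
  obtain ⟨u, hu, h⟩ := exists_coneExtension_eq hR g N v
  obtain ⟨d, hd, h_lt⟩ := exists_hexNorm_sub_lt (sub_ne_zero.2 fun h : v = u => hv (h ▸ hu))
  have h_notMem : u + d ∉ R := fun h_mem => by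
    have h_le := le_coneExtension hR (g := g) (N := N) h_mem v
    have h_lt' : (hexNorm (v - u - d) : ℝ) + 1 ≤ hexNorm (v - u) := by exact_mod_cast h_lt
    rw [h, ← sub_sub] at h_le
    nlinarith [hN u hu _ h_mem, hN u hu u hu]
  have h_int : ((N * hexNorm (v - u) : ℝ) : UnitAddCircle) = 0 :=
    coe_unitAddCircle_eq_zero_iff.2 ⟨N * hexNorm (v - u), by push_cast; rfl⟩
  rw [h, AddCircle.coe_sub, hg u hu d hd h_notMem, h_int, sub_zero]

end Extension

section Interior

/-- The points of `R` all of whose six neighbours lie in `R`. -/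
def latticeInterior (R : Finset (ℤ × ℤ)) : Finset (ℤ × ℤ) :=
  R.filter fun v => ∀ d, hexNorm d = 1 → v + d ∈ R

variable {R : Finset (ℤ × ℤ)}

lemma mem_latticeInterior {v : ℤ × ℤ} :
    v ∈ latticeInterior R ↔ ∀ d, hexNorm d ≤ 1 → v + d ∈ R := by
  simp only [latticeInterior, Finset.mem_filter]
  refine ⟨fun h d hd => ?_, fun h => ⟨?_, fun d hd => h d hd.le⟩⟩
  · rcases hd.eq_or_lt with hd | hd
    · exact h.2 d hd
    · have : hexNorm d = 0 := le_antisymm (Int.lt_add_one_iff.1 hd) (hexNorm_nonneg d)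
      simpa only [hexNorm_eq_zero_iff.1 this, add_zero] using h.1
  · simpa using h 0 (by decide)

lemma isDiscretelyConvex_latticeInterior (hR : IsDiscretelyConvex (R : Set (ℤ × ℤ))) :
    IsDiscretelyConvex (latticeInterior R : Set (ℤ × ℤ)) := by
  intro p hp q hq a b hab h_near
  simp only [Finset.mem_coe, mem_latticeInterior] at hp hq ⊢
  intro d hd
  have h_sum : a + d + (b + d) = p + d + (q + d) := by rw [add_add_add_comm, hab, add_add_add_comm]
  exact hR (hp d hd) (hq d hd) h_sum (by rwa [add_sub_add_right_eq_sub])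

theorem exists_integral_hive_of_integral_boundary {g : ℤ × ℤ → ℝ} (hR : R.Nonempty)
    (h_conv : IsDiscretelyConvex (R : Set (ℤ × ℤ))) (hg : IsDiscretelyConcaveOn R g)
    (h_int : ∀ u ∈ R, ∀ d, hexNorm d = 1 → u + d ∉ R → (g u : UnitAddCircle) = 0) :
    ∃ γ, IsHive γ ∧ (∀ v, (γ v : UnitAddCircle) = 0) ∧
      ∀ u ∈ R, ∀ d, hexNorm d = 1 → u + d ∉ R → γ u = g u := by
  obtain ⟨N, hN⟩ : ∃ N : ℤ, ∀ u ∈ R, ∀ v ∈ R, g u - g v < N := by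
    obtain ⟨M, hM⟩ := ((R ×ˢ R).image fun x => g x.1 - g x.2).exists_le
    obtain ⟨N, hN⟩ := exists_int_gt M
    exact ⟨N, fun u hu v hv => (hM _ (Finset.mem_image.2
      ⟨(u, v), Finset.mk_mem_product hu hv, rfl⟩)).trans_lt hN⟩
  have hN₀ : 0 ≤ N := by
    obtain ⟨u, hu⟩ := hR
    have := hN u hu u hu
    rw [sub_self] at this
    exact_mod_cast this.le
  have h_hive := (hg.coneExtension hR hN₀ h_conv).isHive
  have h_int_ext (v) (hv : v ∉ latticeInterior R) :
      (coneExtension R hR g N v : UnitAddCircle) = 0 := by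
    by_cases hv_mem : v ∈ R
    · obtain ⟨d, hd, hvd⟩ : ∃ d, hexNorm d = 1 ∧ v + d ∉ R := by
        simpa [latticeInterior, hv_mem] using hv
      rw [coneExtension_of_mem hR hN hv_mem, h_int v hv_mem d hd hvd]
    · exact coe_coneExtension_eq_zero hR hN h_int hv_mem
  obtain ⟨γ, ⟨hγ, hγ_eq⟩, hγ_int⟩ :=
    h_hive.exists_integral (isDiscretelyConvex_latticeInterior h_conv) h_int_ext
  refine ⟨γ, hγ, hγ_int, fun u hu d hd hud => ?_⟩
  rw [hγ_eq u fun h => hud (mem_latticeInterior.1 h d hd.le), coneExtension_of_mem hR hN hu]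

end Interior

section BoundaryConnectedness

lemma IsDiscretelyConvex.apply_eq_of_forall_neighbour {R : Set (ℤ × ℤ)}
    (hR : IsDiscretelyConvex R) {α : Type*} {F : ℤ × ℤ → α}
    (hF : ∀ u ∈ R, ∀ d, hexNorm d = 1 → u + d ∈ R → F (u + d) = F u) {p q : ℤ × ℤ}
    (hp : p ∈ R) (hq : q ∈ R) : F p = F q := by
  induction h : (hexNorm (p - q)).toNat using Nat.strong_induction_on generalizing p q with
  | _ n ih
  have h_nonneg := hexNorm_nonneg (p - q)
  rcases lt_trichotomy (hexNorm (p - q)) 1 with h₁ | h₁ | h₁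
  · have : hexNorm (p - q) = 0 := by omega
    rw [sub_eq_zero.1 (hexNorm_eq_zero_iff.1 this)]
  · simpa using hF q hq (p - q) h₁ (by simpa using hp)
  · obtain ⟨a, b, hab, h_near⟩ := exists_add_eq_of_hexNorm_sub_le_one (p + q)
    obtain rfl : b = p + q - a := eq_sub_of_add_eq' hab
    have ha := hR hp hq hab h_near
    have h_lt : hexNorm (p - a) < hexNorm (p - q) ∧ hexNorm (a - q) < hexNorm (p - q) := by
      have h_pq := hexNorm_le_iff.1 (le_refl (hexNorm (p - q)))
      simp only [← Int.le_sub_one_iff, hexNorm_le_iff, Prod.fst_sub, Prod.snd_sub, Prod.fst_add,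
        Prod.snd_add] at h_near h_pq ⊢
      omega
    exact (ih _ (by omega) hp ha rfl).trans (ih _ (by omega) ha hq rfl)

lemma exists_edge {d : ℤ × ℤ} (hd : hexNorm d = 1) (u : ℤ × ℤ) :
    ∃ (k : Fin 3) (v : ℤ × ℤ), (v + corner (k + 2) = u ∧ v + corner (k + 1) = u + d) ∨
      (v + corner (k + 2) = u + d ∧ v + corner (k + 1) = u) := by
  obtain ⟨k, h | h⟩ := exists_eq_corner_sub_or hd
  · refine ⟨k + 1, u - corner k, .inl ⟨?_, ?_⟩⟩
    · rw [add_one_add_two, sub_add_cancel]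
    · rw [add_one_add_one, ← h]; abel
  · refine ⟨k + 1, u - corner (k + 2), .inr ⟨?_, ?_⟩⟩
    · rw [add_one_add_two, ← neg_eq_iff_eq_neg.2 h]; abel
    · rw [add_one_add_one, sub_add_cancel]

variable {A : Type*} [AddCommGroup A] {R : Finset (ℤ × ℤ)} {g : ℤ × ℤ → A}

/-- The coboundary of the restriction of `g` to `R`: it vanishes on the edges leaving `R`. -/
def restrictedLabel (R : Finset (ℤ × ℤ)) (g : ℤ × ℤ → A) (e : Fin 3 × (ℤ × ℤ)) : A :=
  if e.2 + corner (e.1 + 1) ∈ R ∧ e.2 + corner (e.1 + 2) ∈ R then label g e else 0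

/-- `g` is constant along the edges that bound a triangle not contained in `R`. -/
def IsConstantAlongBoundary (R : Finset (ℤ × ℤ)) (g : ℤ × ℤ → A) : Prop :=
  ∀ p d, hexNorm d = 1 → p ∈ R → p + d ∈ R → p + rot d ∉ R → g (p + d) = g p

lemma hexNorm_corner_sub (k : Fin 3) : hexNorm (corner (k + 2) - corner k) = 1 := by
  fin_cases k <;> decide

lemma IsConstantAlongBoundary.restrictedLabel_up (hg : IsConstantAlongBoundary R g) {k : Fin 3}
    {v : ℤ × ℤ} (h : v + corner k ∉ R) : restrictedLabel R g (k, v) = 0 := by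
  simp only [restrictedLabel, ite_eq_right_iff, label, sub_eq_zero]
  intro h_mem
  have h_rot := rot_corner_sub (k + 2)
  have h_norm := hexNorm_corner_sub (k + 2)
  rw [add_two_add_two] at h_rot h_norm
  rw [add_two_add_one] at h_rot
  have := hg (v + corner (k + 2)) _ h_norm h_mem.2 (by simpa using h_mem.1)
    (by simpa [h_rot] using h)
  simpa using this

lemma IsConstantAlongBoundary.restrictedLabel_down (hg : IsConstantAlongBoundary R g) {k : Fin 3}
    {w : ℤ × ℤ} (h : w + corner (k + 1) + corner (k + 2) ∉ R) :
    restrictedLabel R g (k, w + corner k) = 0 := by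
  simp only [restrictedLabel, ite_eq_right_iff, label, sub_eq_zero]
  intro h_mem
  have h_rot := rot_corner_sub (k + 2)
  have h_norm := hexNorm_corner_sub (k + 2)
  rw [add_two_add_two] at h_rot h_norm
  rw [add_two_add_one] at h_rot
  refine (hg (w + corner k + corner (k + 1)) (corner (k + 2) - corner (k + 1)) ?_ h_mem.1
    (by simpa using h_mem.2) ?_).symm.trans (by simp)
  · rwa [← neg_sub, hexNorm_neg]
  · rwa [← neg_sub, map_neg, h_rot, show w + corner k + corner (k + 1) + -(corner k -
      corner (k + 2)) = w + corner (k + 1) + corner (k + 2) by abel]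

lemma IsConstantAlongBoundary.isCocycle_restrictedLabel (hg : IsConstantAlongBoundary R g) :
    IsCocycle (restrictedLabel R g) where
  up v := by
    by_cases h : ∀ j, v + corner j ∈ R
    · simpa only [restrictedLabel, h, and_self, if_true] using (isCocycle_label g).up v
    push Not at h
    obtain ⟨j, hj⟩ := h
    refine Finset.sum_eq_zero fun k _ => ?_
    rcases eq_or_eq_add_one_or j k with rfl | rfl | rfl
    · exact hg.restrictedLabel_up hj
    · exact if_neg fun h => hj h.1
    · exact if_neg fun h => hj h.2
  down w := by
    by_cases h : ∀ j, w + corner j + corner (j + 1) ∈ R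
    · refine (Finset.sum_congr rfl fun k _ => if_pos ⟨h k, ?_⟩).trans ((isCocycle_label g).down w)
      have := h (k + 2)
      rwa [add_two_add_one, add_right_comm] at this
    push Not at h
    obtain ⟨j, hj⟩ := h
    refine Finset.sum_eq_zero fun k _ => ?_
    rcases eq_or_eq_add_one_or j k with rfl | rfl | rfl
    · exact if_neg fun h => hj h.1
    · exact hg.restrictedLabel_down (by rwa [add_one_add_one] at hj)
    · refine if_neg fun h => hj ?_
      rw [add_two_add_one, add_right_comm]
      exact h.2

lemma isLocalized_restrictedLabel : IsLocalized R (restrictedLabel R g) :=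
  fun _ _ h _ => if_neg fun h' => h h'.1

lemma sub_eq_of_label_eq_restrictedLabel {D : ℤ × ℤ → A} (hD : label D = restrictedLabel R g)
    {d : ℤ × ℤ} (hd : hexNorm d = 1) (u : ℤ × ℤ) :
    D (u + d) - D u = if u ∈ R ∧ u + d ∈ R then g (u + d) - g u else 0 := by
  obtain ⟨k, v, ⟨h, h'⟩ | ⟨h, h'⟩⟩ := exists_edge hd u
  · simpa only [label, restrictedLabel, h, h', and_comm] using congrFun hD (k, v)
  · have := congrFun hD (k, v)
    simp only [label, restrictedLabel, h, h'] at this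
    rw [← neg_sub, this, ← neg_sub (g u), ← neg_zero, ← apply_ite Neg.neg, neg_zero]

-- The restricted coboundary integrates to a potential that vanishes off `R`, hence on the boundary
-- of `R`, and differs from `g` by a constant on `R`.
theorem IsConstantAlongBoundary.exists_eq_const (hR : IsDiscretelyConvex (R : Set (ℤ × ℤ)))
    (hg : IsConstantAlongBoundary R g) :
    ∃ c, ∀ u ∈ R, ∀ d, hexNorm d = 1 → u + d ∉ R → g u = c := by
  rcases R.eq_empty_or_nonempty with rfl | ⟨p, hp⟩
  · exact ⟨0, fun u hu => absurd hu (Finset.notMem_empty u)⟩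
  obtain ⟨D, hD_fin, hD⟩ :=
    hg.isCocycle_restrictedLabel.exists_potential isLocalized_restrictedLabel.finite_support
  have h_diff {u} {d} (hd : hexNorm d = 1) := sub_eq_of_label_eq_restrictedLabel hD hd u
  have h_const (u) (hu : u ∈ R) : (g - D) u = (g - D) p := by
    refine hR.apply_eq_of_forall_neighbour (fun v hv d hd hvd => ?_) hu hp
    have := h_diff (u := v) hd
    rw [if_pos ⟨hv, hvd⟩] at this
    rw [Pi.sub_apply, Pi.sub_apply, sub_eq_sub_iff_sub_eq_sub, this]
  refine ⟨(g - D) p, fun u hu d hd hud => ?_⟩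
  have h_out : D (u + d) = 0 :=
    eq_zero_of_isLocalized_label hR hD_fin (hD ▸ isLocalized_restrictedLabel) hud
  have h_zero : D u = 0 := by
    simpa only [hud, and_false, if_false, h_out, zero_sub, neg_eq_zero] using h_diff (u := u) hd
  rw [← h_const u hu, Pi.sub_apply, h_zero, sub_zero]

end BoundaryConnectedness

lemma IsDiscretelyConcaveOn.sub_const {R : Set (ℤ × ℤ)} {g : ℤ × ℤ → ℝ}
    (hg : IsDiscretelyConcaveOn R g) (c : ℝ) : IsDiscretelyConcaveOn R fun v => g v - c :=
  fun p hp q hq a b hab h_near => by linarith [hg hp hq hab h_near]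

theorem IsDiscretelyConcaveOn.exists_integral_hive {R : Finset (ℤ × ℤ)} (hR : R.Nonempty)
    (h_conv : IsDiscretelyConvex (R : Set (ℤ × ℤ))) {g : ℤ × ℤ → ℝ}
    (hg : IsDiscretelyConcaveOn R g)
    (h_int : IsConstantAlongBoundary R fun v => (g v : UnitAddCircle)) :
    ∃ γ, IsHive γ ∧ (∀ v, ∃ n : ℤ, γ v = n) ∧ ∀ p d, hexNorm d = 1 → p ∈ R → p + d ∈ R →
      p + rot d ∉ R → γ (p + d) - γ p = g (p + d) - g p := by
  obtain ⟨c, hc⟩ := h_int.exists_eq_const h_conv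
  obtain ⟨c, rfl⟩ := QuotientAddGroup.mk_surjective c
  obtain ⟨γ, hγ, hγ_int, hγ_eq⟩ :=
    exists_integral_hive_of_integral_boundary hR h_conv (hg.sub_const c)
      fun u hu d hd hud => sub_eq_zero.2 (hc u hu d hd hud)
  refine ⟨γ, hγ, fun v => coe_unitAddCircle_eq_zero_iff.1 (hγ_int v), fun p d hd hp hpd h => ?_⟩
  have hd' : hexNorm (rot d) = 1 := by rwa [hexNorm_rot]
  have hd'' : hexNorm (rot (rot d)) = 1 := by rwa [hexNorm_rot]
  rw [hγ_eq p hp _ hd' h, hγ_eq (p + d) hpd _ hd'' (by rw [rot_rot]; simpa using h)]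
  ring

namespace IsHive

variable {g : ℤ × ℤ → ℝ} {d : ℤ × ℤ}

lemma antitone_sub (hg : IsHive g) (hd : hexNorm d = 1) (p : ℤ × ℤ) :
    Antitone fun m : ℤ => g (p + m • d + rot d) - g (p + m • d) :=
  antitone_int_of_succ_le fun m => by
    have := hg (p + m • d) d hd
    rw [slack] at this
    simp only [add_smul, one_smul, ← add_assoc]
    linarith

lemma le_interpolation_of_same_sign (hg : IsHive g) (hd : hexNorm d = 1) (p : ℤ × ℤ) {m n : ℤ}
    (h : 0 ≤ m ∧ 0 ≤ n ∨ m ≤ 0 ∧ n ≤ 0) : g (p + m • d + n • rot d) ≤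
      g p + m * (g (p + d) - g p) + n * (g (p + rot d) - g p) := by
  have h_d := hg.le_add_smul hd p m
  have h_rot := hg.le_add_smul (d := rot d) (by rwa [hexNorm_rot]) (p + m • d) n
  have h_slope : n * (g (p + m • d + rot d) - g (p + m • d)) ≤ n * (g (p + rot d) - g p) := by
    rcases h with ⟨hm, hn⟩ | ⟨hm, hn⟩
    · exact mul_le_mul_of_nonneg_left (by simpa using hg.antitone_sub hd p hm) (mod_cast hn)
    · exact mul_le_mul_of_nonpos_left (by simpa using hg.antitone_sub hd p hm) (mod_cast hn)
  linarith

-- Two of the three barycentric coordinates `1 - m - n`, `m`, `n` have the same sign.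
theorem le_interpolation (hg : IsHive g) (hd : hexNorm d = 1) (p : ℤ × ℤ) (m n : ℤ) :
    g (p + m • d + n • rot d) ≤ g p + m * (g (p + d) - g p) + n * (g (p + rot d) - g p) := by
  have h_cases : (0 ≤ m ∧ 0 ≤ n ∨ m ≤ 0 ∧ n ≤ 0) ∨
      (0 ≤ 1 - m - n ∧ 0 ≤ m ∨ 1 - m - n ≤ 0 ∧ m ≤ 0) ∨
      (0 ≤ n ∧ 0 ≤ 1 - m - n ∨ n ≤ 0 ∧ 1 - m - n ≤ 0) := by omega
  rcases h_cases with h | h | h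
  · exact hg.le_interpolation_of_same_sign hd p h
  · have := hg.le_interpolation_of_same_sign (d := -rot d) (by rwa [hexNorm_neg, hexNorm_rot])
      (p + rot d) h
    have h_q : p + rot d + (1 - m - n) • -rot d + m • rot (-rot d) = p + m • d + n • rot d := by
      rw [map_neg, rot_rot]; module
    rw [h_q, map_neg, rot_rot, add_neg_cancel_right, neg_sub, add_add_sub_cancel] at this
    push_cast at this
    linarith
  · have := hg.le_interpolation_of_same_sign (d := rot (rot d)) (by rwa [hexNorm_rot, hexNorm_rot])
      (p + d) h
    have h_q : p + d + n • rot (rot d) + (1 - m - n) • rot (rot (rot d)) =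
        p + m • d + n • rot d := by
      rw [rot_rot_rot, rot_rot]; module
    rw [h_q, rot_rot_rot, rot_rot, add_neg_cancel_right, add_add_sub_cancel] at this
    push_cast at this
    linarith

end IsHive

section LatticeTriangles

/-- The point of the plane with the given integer coordinates. -/
def latticePoint : ℤ × ℤ →+ ℝ × ℝ := (Int.castAddHom ℝ).prodMap (Int.castAddHom ℝ)

@[simp] lemma latticePoint_fst (v : ℤ × ℤ) : (latticePoint v).1 = v.1 := rfl

@[simp] lemma latticePoint_snd (v : ℤ × ℤ) : (latticePoint v).2 = v.2 := rfl

/-- The generators `ξ₁, ξ₂, ξ₃` in the coordinates of the lattice. -/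
def direction : Fin 3 → ℤ × ℤ := ![(1, 0), (-1, 1), (0, -1)]

/-- The vertices of the little triangle `x` with base point `x.1`, which points upward if and only
if `x.2 = true`. They are numbered so that the edge of direction `i` starts at the `i`-th vertex. -/
def triangleVertex (x : (ℤ × ℤ) × Bool) : Fin 3 → ℤ × ℤ :=
  if x.2 then ![x.1, x.1 + (1, 0), x.1 + (0, 1)] else ![x.1, x.1 + (1, -1), x.1 + (1, 0)]

/-- The closed region spanned by a little triangle. -/
def triangleRegion (x : (ℤ × ℤ) × Bool) : Set (ℝ × ℝ) :=
  convexHull ℝ (Set.range fun i => latticePoint (triangleVertex x i))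

/-- The little triangle of the given orientation whose edge of direction `i` starts at `p`. -/
def triangleAt (p : ℤ × ℤ) (i : Fin 3) (up : Bool) : (ℤ × ℤ) × Bool :=
  (p - triangleVertex (0, up) i, up)

lemma triangleVertex_triangleAt (p : ℤ × ℤ) (i : Fin 3) (up : Bool) :
    triangleVertex (triangleAt p i up) i = p := by
  cases up <;> fin_cases i <;> simp [triangleVertex, triangleAt]

lemma triangleAt_triangleVertex (x : (ℤ × ℤ) × Bool) (i : Fin 3) :
    triangleAt (triangleVertex x i) i x.2 = x := by
  obtain ⟨u, _ | _⟩ := x <;> fin_cases i <;> simp [triangleVertex, triangleAt]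

lemma triangleVertex_triangleAt_true_add_one (p : ℤ × ℤ) (i : Fin 3) :
    triangleVertex (triangleAt p i true) (i + 1) = p + direction i := by
  fin_cases i <;> ext <;> simp [triangleVertex, triangleAt, direction] <;> ring

lemma triangleVertex_triangleAt_true_add_two (p : ℤ × ℤ) (i : Fin 3) :
    triangleVertex (triangleAt p i true) (i + 2) = p + rot (direction i) := by
  fin_cases i <;> ext <;> simp [triangleVertex, triangleAt, direction, rot_apply] <;> ring

lemma triangleVertex_triangleAt_false_add_one (p : ℤ × ℤ) (i : Fin 3) :
    triangleVertex (triangleAt p i false) (i + 1) = p + direction i + rot (-direction i) := by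
  fin_cases i <;> ext <;> simp [triangleVertex, triangleAt, direction, rot_apply]; ring

lemma triangleVertex_triangleAt_false_add_two (p : ℤ × ℤ) (i : Fin 3) :
    triangleVertex (triangleAt p i false) (i + 2) = p + direction i := by
  fin_cases i <;> ext <;> simp [triangleVertex, triangleAt, direction]; ring

/-- The coordinates of the points of the plane with respect to the edges leaving the base point of
the little triangle `x`; the third barycentric coordinate is `1` minus their sum. -/
def triangleCoord (x : (ℤ × ℤ) × Bool) : ℝ × ℝ →ᵃ[ℝ] ℝ × ℝ :=
  if x.2 then LinearMap.id.toAffineMap - AffineMap.const ℝ _ (latticePoint x.1)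
  else ((-LinearMap.snd ℝ ℝ ℝ).prod (LinearMap.fst ℝ ℝ ℝ + LinearMap.snd ℝ ℝ ℝ)).toAffineMap -
    AffineMap.const ℝ _ (latticePoint (-x.1.2, x.1.1 + x.1.2))

/-- The affine function that agrees with `γ` at the vertices of the little triangle `x`. -/
def interpolation (γ : ℤ × ℤ → ℝ) (x : (ℤ × ℤ) × Bool) : ℝ × ℝ →ᵃ[ℝ] ℝ :=
  let slope (i : Fin 3) : ℝ := γ (triangleVertex x i) - γ (triangleVertex x 0)
  AffineMap.const ℝ _ (γ (triangleVertex x 0)) +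
    (slope 1 • LinearMap.fst ℝ ℝ ℝ + slope 2 • LinearMap.snd ℝ ℝ ℝ).toAffineMap.comp
      (triangleCoord x)

lemma interpolation_apply (γ : ℤ × ℤ → ℝ) (x : (ℤ × ℤ) × Bool) (y : ℝ × ℝ) :
    interpolation γ x y = γ (triangleVertex x 0) +
      ((triangleCoord x y).1 * (γ (triangleVertex x 1) - γ (triangleVertex x 0)) +
      (triangleCoord x y).2 * (γ (triangleVertex x 2) - γ (triangleVertex x 0))) := by
  simp [interpolation, mul_comm]

lemma triangleCoord_triangleVertex (x : (ℤ × ℤ) × Bool) (i : Fin 3) :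
    triangleCoord x (latticePoint (triangleVertex x i)) = ![(0, 0), (1, 0), (0, 1)] i := by
  obtain ⟨u, _ | _⟩ := x <;> fin_cases i <;>
    ext <;> simp [triangleCoord, triangleVertex]
  ring

lemma interpolation_triangleVertex (γ : ℤ × ℤ → ℝ) (x : (ℤ × ℤ) × Bool) (i : Fin 3) :
    interpolation γ x (latticePoint (triangleVertex x i)) = γ (triangleVertex x i) := by
  rw [interpolation_apply, triangleCoord_triangleVertex]
  fin_cases i <;> simp

lemma sum_smul_triangleVertex (x : (ℤ × ℤ) × Bool) (y : ℝ × ℝ) :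
    ∑ i, ![1 - (triangleCoord x y).1 - (triangleCoord x y).2, (triangleCoord x y).1,
      (triangleCoord x y).2] i • latticePoint (triangleVertex x i) = y := by
  obtain ⟨u, _ | _⟩ := x <;> ext <;>
    simp [Fin.sum_univ_three, triangleCoord, triangleVertex] <;> ring

lemma mem_triangleRegion_iff {x : (ℤ × ℤ) × Bool} {y : ℝ × ℝ} : y ∈ triangleRegion x ↔
    0 ≤ (triangleCoord x y).1 ∧ 0 ≤ (triangleCoord x y).2 ∧
      (triangleCoord x y).1 + (triangleCoord x y).2 ≤ 1 := by
  constructor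
  · have h_convex : Convex ℝ {c : ℝ × ℝ | 0 ≤ c.1 ∧ 0 ≤ c.2 ∧ c.1 + c.2 ≤ 1} :=
      ((convex_halfSpace_ge (LinearMap.fst ℝ ℝ ℝ).isLinear 0).inter
        ((convex_halfSpace_ge (LinearMap.snd ℝ ℝ ℝ).isLinear 0).inter
          (convex_halfSpace_le (LinearMap.fst ℝ ℝ ℝ + LinearMap.snd ℝ ℝ ℝ).isLinear 1)))
    refine fun hy => convexHull_min ?_ (h_convex.affine_preimage (triangleCoord x)) hy
    rintro _ ⟨i, rfl⟩
    simp only [Set.mem_preimage, triangleCoord_triangleVertex]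
    fin_cases i <;> simp
  · rintro ⟨h₁, h₂, h₃⟩
    rw [← sum_smul_triangleVertex x y]
    refine (convex_convexHull ℝ _).sum_mem (fun i _ => ?_) (by simp [Fin.sum_univ_three]; ring)
      fun i _ => subset_convexHull ℝ _ ⟨i, rfl⟩
    fin_cases i
    exacts [by simp; linarith, h₁, h₂]

lemma affineMap_le_of_mem_triangleRegion {x : (ℤ × ℤ) × Bool} {φ ψ : ℝ × ℝ →ᵃ[ℝ] ℝ}
    (h : ∀ i, φ (latticePoint (triangleVertex x i)) ≤ ψ (latticePoint (triangleVertex x i)))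
    {y : ℝ × ℝ} (hy : y ∈ triangleRegion x) : φ y ≤ ψ y := by
  have h_convex : Convex ℝ {y | 0 ≤ (ψ - φ) y} := (convex_Ici 0).affine_preimage (ψ - φ)
  have h_vertex : (Set.range fun i => latticePoint (triangleVertex x i)) ⊆ {y | 0 ≤ (ψ - φ) y} :=
    Set.range_subset_iff.2 fun i => sub_nonneg.2 (h i)
  exact sub_nonneg.1 (convexHull_min h_vertex h_convex hy)

lemma latticePoint_triangleVertex_mem (x : (ℤ × ℤ) × Bool) (i : Fin 3) :
    latticePoint (triangleVertex x i) ∈ triangleRegion x :=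
  subset_convexHull ℝ _ ⟨i, rfl⟩

lemma triangleCoord_inv_smul_latticePoint (x : (ℤ × ℤ) × Bool) (c : ℤ × ℤ) {n : ℤ} (hn : n ≠ 0) :
    triangleCoord x ((n : ℝ)⁻¹ • latticePoint c) = (n : ℝ)⁻¹ • latticePoint
      (if x.2 then c - n • x.1 else (n * x.1.2 - c.2, c.1 + c.2 - n * (x.1.1 + x.1.2))) := by
  obtain ⟨u, _ | _⟩ := x <;> ext <;> simp [triangleCoord] <;> field_simp
  ring

lemma inv_smul_latticePoint_mem_iff {x : (ℤ × ℤ) × Bool} {c : ℤ × ℤ} {n : ℤ} (hn : 0 < n) :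
    (n : ℝ)⁻¹ • latticePoint c ∈ triangleRegion x ↔
      if x.2 then n * x.1.1 ≤ c.1 ∧ n * x.1.2 ≤ c.2 ∧ c.1 + c.2 ≤ n * (x.1.1 + x.1.2 + 1)
      else c.2 ≤ n * x.1.2 ∧ n * (x.1.1 + x.1.2) ≤ c.1 + c.2 ∧ c.1 ≤ n * (x.1.1 + 1) := by
  have hn' : (0 : ℝ) < n := mod_cast hn
  rw [mem_triangleRegion_iff, triangleCoord_inv_smul_latticePoint x c hn.ne']
  simp only [Prod.smul_fst, Prod.smul_snd, smul_eq_mul, ← mul_add,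
    mul_nonneg_iff_of_pos_left (inv_pos.2 hn'), inv_mul_le_iff₀ hn', mul_one]
  obtain ⟨u, _ | _⟩ := x <;> simp <;> norm_cast <;> grind

lemma latticePoint_mem_iff {x : (ℤ × ℤ) × Bool} {v : ℤ × ℤ} :
    latticePoint v ∈ triangleRegion x ↔ ∃ i, triangleVertex x i = v := by
  refine ⟨fun h => ?_, fun ⟨i, hi⟩ => hi ▸ latticePoint_triangleVertex_mem x i⟩
  have h := (inv_smul_latticePoint_mem_iff one_pos).1 (by simpa using h)
  obtain ⟨u, _ | _⟩ := x <;>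
    simp [Fin.exists_fin_succ, triangleVertex, Prod.ext_iff] at h ⊢ <;> omega

lemma latticePoint_mem_of_midpoint_mem {x : (ℤ × ℤ) × Bool} {a b : ℤ × ℤ}
    (hab : hexNorm (a - b) ≤ 1)
    (h : (2 : ℝ)⁻¹ • latticePoint (a + b) ∈ triangleRegion x) :
    latticePoint a ∈ triangleRegion x := by
  have h₂ := (inv_smul_latticePoint_mem_iff two_pos).1 (by exact_mod_cast h)
  have h₁ := hexNorm_le_iff.1 hab
  suffices (((1 : ℤ) : ℝ)⁻¹ • latticePoint a) ∈ triangleRegion x by simpa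
  rw [inv_smul_latticePoint_mem_iff one_pos]
  obtain ⟨u, _ | _⟩ := x <;> simp at h₁ h₂ ⊢ <;> omega

lemma eq_triangleAt_of_midpoint_mem {x : (ℤ × ℤ) × Bool} {p : ℤ × ℤ} {i : Fin 3}
    (h : (2 : ℝ)⁻¹ • latticePoint (p + (p + direction i)) ∈ triangleRegion x) :
    x = triangleAt p i x.2 := by
  have h₂ := (inv_smul_latticePoint_mem_iff two_pos).1 (by exact_mod_cast h)
  obtain ⟨u, _ | _⟩ := x <;> fin_cases i <;>
    simp [triangleAt, triangleVertex, direction, Prod.ext_iff] at h₂ ⊢ <;> omega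

lemma eq_of_centroid_mem {x x' : (ℤ × ℤ) × Bool}
    (h : (3 : ℝ)⁻¹ • latticePoint (∑ i, triangleVertex x i) ∈ triangleRegion x') : x' = x := by
  have h₃ := (inv_smul_latticePoint_mem_iff three_pos).1 (by exact_mod_cast h)
  obtain ⟨u, _ | _⟩ := x <;> obtain ⟨u', _ | _⟩ := x' <;>
    simp [Fin.sum_univ_three, triangleVertex, Prod.ext_iff] at h₃ ⊢ <;> omega

end LatticeTriangles

section LatticeGrids

variable {𝒯 : Finset ((ℤ × ℤ) × Bool)}

/-- The region covered by a finite set of little triangles. -/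
def latticeRegion (𝒯 : Finset ((ℤ × ℤ) × Bool)) : Set (ℝ × ℝ) := ⋃ x ∈ 𝒯, triangleRegion x

/-- The vertices of a finite set of little triangles. -/
def gridVertices (𝒯 : Finset ((ℤ × ℤ) × Bool)) : Finset (ℤ × ℤ) :=
  𝒯.biUnion fun x => Finset.univ.image (triangleVertex x)

/-- The edge of direction `i` starting at `p` lies in exactly one of the triangles of `𝒯`. -/
def IsBoundaryEdge (𝒯 : Finset ((ℤ × ℤ) × Bool)) (p : ℤ × ℤ) (i : Fin 3) : Prop :=
  ∃! up, triangleAt p i up ∈ 𝒯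

lemma triangleVertex_mem_gridVertices {x : (ℤ × ℤ) × Bool} (hx : x ∈ 𝒯) (i : Fin 3) :
    triangleVertex x i ∈ gridVertices 𝒯 :=
  Finset.mem_biUnion.2 ⟨x, hx, Finset.mem_image_of_mem _ (Finset.mem_univ i)⟩

lemma latticePoint_mem_latticeRegion_iff {v : ℤ × ℤ} :
    latticePoint v ∈ latticeRegion 𝒯 ↔ v ∈ gridVertices 𝒯 := by
  simp [latticeRegion, gridVertices, latticePoint_mem_iff]

lemma exists_midpoint_mem (h_conv : Convex ℝ (latticeRegion 𝒯)) {p q : ℤ × ℤ}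
    (hp : p ∈ gridVertices 𝒯) (hq : q ∈ gridVertices 𝒯) :
    ∃ x ∈ 𝒯, (2 : ℝ)⁻¹ • latticePoint (p + q) ∈ triangleRegion x := by
  have h := h_conv.midpoint_mem (latticePoint_mem_latticeRegion_iff.2 hp)
    (latticePoint_mem_latticeRegion_iff.2 hq)
  simpa [midpoint_eq_smul_add, latticeRegion] using h

lemma isDiscretelyConvex_gridVertices (h_conv : Convex ℝ (latticeRegion 𝒯)) :
    IsDiscretelyConvex (gridVertices 𝒯 : Set (ℤ × ℤ)) := by
  intro p hp q hq a b hab h_near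
  obtain ⟨x, hx, h_mem⟩ := exists_midpoint_mem h_conv hp hq
  rw [← hab] at h_mem
  exact latticePoint_mem_latticeRegion_iff.1
    (Set.mem_biUnion hx (latticePoint_mem_of_midpoint_mem h_near h_mem))

lemma isDiscretelyConcaveOn_gridVertices {f : ℝ × ℝ → ℝ} (hf : ConcaveOn ℝ (latticeRegion 𝒯) f)
    (h_affine : ∀ x ∈ 𝒯, AffineOn f (triangleRegion x)) :
    IsDiscretelyConcaveOn (gridVertices 𝒯) fun v => f (latticePoint v) := by
  intro p hp q hq a b hab h_near
  obtain ⟨x, hx, h_mem⟩ := exists_midpoint_mem hf.1 hp hq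
  have ha := latticePoint_mem_of_midpoint_mem h_near (hab ▸ h_mem)
  have hb := latticePoint_mem_of_midpoint_mem (hexNorm_sub_comm a b ▸ h_near)
    (add_comm a b ▸ hab ▸ h_mem)
  obtain ⟨φ, hφ⟩ := h_affine x hx
  have h_concave : 2⁻¹ * f (latticePoint p) + 2⁻¹ * f (latticePoint q) ≤
      f ((2 : ℝ)⁻¹ • latticePoint (p + q)) := by
    rw [map_add, smul_add]
    exact hf.2 (latticePoint_mem_latticeRegion_iff.2 hp) (latticePoint_mem_latticeRegion_iff.2 hq)
      (by norm_num) (by norm_num) (by norm_num)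
  have h_linear : f ((2 : ℝ)⁻¹ • latticePoint (a + b)) =
      2⁻¹ * f (latticePoint a) + 2⁻¹ * f (latticePoint b) := by
    rw [hφ _ ha, hφ _ hb, hφ _ (hab ▸ h_mem)]
    simpa [midpoint_eq_smul_add, mul_add] using φ.map_midpoint (latticePoint a) (latticePoint b)
  rw [hab] at h_linear
  linarith

lemma mem_of_triangleVertex_mem (h_conv : Convex ℝ (latticeRegion 𝒯)) {x : (ℤ × ℤ) × Bool}
    {i : Fin 3} (h₀ : triangleVertex x i ∈ gridVertices 𝒯)
    (h₁ : triangleVertex x (i + 1) ∈ gridVertices 𝒯)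
    (h₂ : triangleVertex x (i + 2) ∈ gridVertices 𝒯) : x ∈ 𝒯 := by
  have h_vertex (j : Fin 3) : triangleVertex x j ∈ gridVertices 𝒯 := by
    obtain rfl | rfl | rfl : j = i ∨ j = i + 1 ∨ j = i + 2 := by omega
    exacts [h₀, h₁, h₂]
  have h_centroid : (3 : ℝ)⁻¹ • latticePoint (∑ j, triangleVertex x j) ∈ latticeRegion 𝒯 := by
    rw [map_sum, Finset.smul_sum]
    exact h_conv.sum_mem (fun _ _ => by positivity) (by norm_num)
      fun j _ => latticePoint_mem_latticeRegion_iff.2 (h_vertex j)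
  simp only [latticeRegion, Set.mem_iUnion] at h_centroid
  obtain ⟨x', hx', h_mem⟩ := h_centroid
  exact eq_of_centroid_mem h_mem ▸ hx'

lemma hexNorm_direction (i : Fin 3) : hexNorm (direction i) = 1 := by
  fin_cases i <;> decide

lemma exists_direction_of_hexNorm_eq_one {d : ℤ × ℤ} (hd : hexNorm d = 1) :
    ∃ i, d = direction i ∨ d = -direction i := by
  rcases hexNorm_eq_one_iff.1 hd with rfl | rfl | rfl | rfl | rfl | rfl <;> decide

lemma start_mem_gridVertices {p : ℤ × ℤ} {i : Fin 3} {up : Bool} (h : triangleAt p i up ∈ 𝒯) :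
    p ∈ gridVertices 𝒯 :=
  triangleVertex_triangleAt p i up ▸ triangleVertex_mem_gridVertices h i

lemma end_mem_gridVertices {p : ℤ × ℤ} {i : Fin 3} {up : Bool} (h : triangleAt p i up ∈ 𝒯) :
    p + direction i ∈ gridVertices 𝒯 := by
  cases up
  · exact triangleVertex_triangleAt_false_add_two p i ▸ triangleVertex_mem_gridVertices h _
  · exact triangleVertex_triangleAt_true_add_one p i ▸ triangleVertex_mem_gridVertices h _

lemma triangleAt_true_mem_iff (h_conv : Convex ℝ (latticeRegion 𝒯)) {p : ℤ × ℤ} {i : Fin 3}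
    (hp : p ∈ gridVertices 𝒯) (hq : p + direction i ∈ gridVertices 𝒯) :
    triangleAt p i true ∈ 𝒯 ↔ p + rot (direction i) ∈ gridVertices 𝒯 := by
  rw [← triangleVertex_triangleAt_true_add_two]
  rw [← triangleVertex_triangleAt_true_add_one] at hq
  rw [← triangleVertex_triangleAt p i true] at hp
  exact ⟨fun h => triangleVertex_mem_gridVertices h _, mem_of_triangleVertex_mem h_conv hp hq⟩

lemma triangleAt_false_mem_iff (h_conv : Convex ℝ (latticeRegion 𝒯)) {p : ℤ × ℤ} {i : Fin 3}
    (hp : p ∈ gridVertices 𝒯) (hq : p + direction i ∈ gridVertices 𝒯) :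
    triangleAt p i false ∈ 𝒯 ↔ p + direction i + rot (-direction i) ∈ gridVertices 𝒯 := by
  rw [← triangleVertex_triangleAt_false_add_one]
  rw [← triangleVertex_triangleAt_false_add_two] at hq
  rw [← triangleVertex_triangleAt p i false] at hp
  exact ⟨fun h => triangleVertex_mem_gridVertices h _,
    fun h => mem_of_triangleVertex_mem h_conv hp h hq⟩

lemma exists_triangleAt_mem (h_conv : Convex ℝ (latticeRegion 𝒯)) {p : ℤ × ℤ} {i : Fin 3}
    (hp : p ∈ gridVertices 𝒯) (hq : p + direction i ∈ gridVertices 𝒯) :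
    ∃ up, triangleAt p i up ∈ 𝒯 := by
  obtain ⟨x, hx, h_mem⟩ := exists_midpoint_mem h_conv hp hq
  exact ⟨x.2, eq_triangleAt_of_midpoint_mem h_mem ▸ hx⟩

lemma isBoundaryEdge_iff (h_conv : Convex ℝ (latticeRegion 𝒯)) {p : ℤ × ℤ} {i : Fin 3} :
    IsBoundaryEdge 𝒯 p i ↔ (p ∈ gridVertices 𝒯 ∧ p + direction i ∈ gridVertices 𝒯) ∧
      (p + rot (direction i) ∉ gridVertices 𝒯 ∨
        p + direction i + rot (-direction i) ∉ gridVertices 𝒯) := by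
  by_cases h : p ∈ gridVertices 𝒯 ∧ p + direction i ∈ gridVertices 𝒯
  · obtain ⟨up, h_up⟩ := exists_triangleAt_mem h_conv h.1 h.2
    rw [IsBoundaryEdge, ← triangleAt_true_mem_iff h_conv h.1 h.2,
      ← triangleAt_false_mem_iff h_conv h.1 h.2]
    cases up <;> simp [ExistsUnique, h, h_up]
  · simp only [h, false_and, iff_false]
    rintro ⟨up, h_up, -⟩
    exact h ⟨start_mem_gridVertices h_up, end_mem_gridVertices h_up⟩

lemma forall_isBoundaryEdge_iff (h_conv : Convex ℝ (latticeRegion 𝒯)) {P : ℤ × ℤ → ℤ × ℤ → Prop}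
    (h_symm : ∀ a b, P a b → P b a) :
    (∀ p i, IsBoundaryEdge 𝒯 p i → P p (p + direction i)) ↔
      ∀ p d, hexNorm d = 1 → p ∈ gridVertices 𝒯 → p + d ∈ gridVertices 𝒯 →
        p + rot d ∉ gridVertices 𝒯 → P p (p + d) := by
  constructor
  · intro h p d hd hp hq h_third
    obtain ⟨i, rfl | rfl⟩ := exists_direction_of_hexNorm_eq_one hd
    · exact h p i ((isBoundaryEdge_iff h_conv).2 ⟨⟨hp, hq⟩, .inl h_third⟩)
    · have h_edge := h (p + -direction i) i ((isBoundaryEdge_iff h_conv).2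
        ⟨⟨hq, by simpa using hp⟩, .inr (by simpa using h_third)⟩)
      exact h_symm _ _ (by simpa using h_edge)
  · intro h p i h_edge
    obtain ⟨⟨hp, hq⟩, h_third | h_third⟩ := (isBoundaryEdge_iff h_conv).1 h_edge
    · exact h p _ (hexNorm_direction i) hp hq h_third
    · have h_pair := h (p + direction i) (-direction i)
        ((hexNorm_neg _).trans (hexNorm_direction i)) hq (by simpa using hp) h_third
      exact h_symm _ _ (by simpa using h_pair)

theorem IsHive.le_interpolation_latticePoint {γ : ℤ × ℤ → ℝ} (hγ : IsHive γ)
    (x : (ℤ × ℤ) × Bool) (v : ℤ × ℤ) : γ v ≤ interpolation γ x (latticePoint v) := by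
  rw [interpolation_apply]
  obtain ⟨u, _ | _⟩ := x
  · have h := hγ.le_interpolation (d := (1, -1)) (by decide) u (u.2 - v.2) (v.1 + v.2 - u.1 - u.2)
    have h_v : u + (u.2 - v.2) • (1, -1) + (v.1 + v.2 - u.1 - u.2) • rot (1, -1) = v := by
      ext <;> simp [rot_apply]
      ring
    rw [h_v] at h
    simpa [triangleCoord, triangleVertex, rot_apply, add_assoc, sub_sub, neg_add_eq_sub] using h
  · have h := hγ.le_interpolation (d := (1, 0)) (by decide) u (v.1 - u.1) (v.2 - u.2)
    have h_v : u + (v.1 - u.1) • (1, 0) + (v.2 - u.2) • rot (1, 0) = v := by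
      ext <;> simp [rot_apply]
    rw [h_v] at h
    simpa [triangleCoord, triangleVertex, rot_apply, add_assoc] using h

/-- The concave envelope of the affine functions interpolating `γ` on the triangles of `𝒯`. -/
def envelope (h_ne : 𝒯.Nonempty) (γ : ℤ × ℤ → ℝ) (y : ℝ × ℝ) : ℝ :=
  𝒯.inf' h_ne fun x => interpolation γ x y

lemma concaveOn_envelope (h_ne : 𝒯.Nonempty) (γ : ℤ × ℤ → ℝ) :
    ConcaveOn ℝ Set.univ (envelope h_ne γ) := by
  refine ⟨convex_univ, fun y _ z _ a b ha hb hab => Finset.le_inf' _ _ fun x hx => ?_⟩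
  rw [Convex.combo_affine_apply hab]
  gcongr <;> exact Finset.inf'_le _ hx

lemma IsHive.envelope_eq (h_ne : 𝒯.Nonempty) {γ : ℤ × ℤ → ℝ} (hγ : IsHive γ)
    {x : (ℤ × ℤ) × Bool} (hx : x ∈ 𝒯) {y : ℝ × ℝ} (hy : y ∈ triangleRegion x) :
    envelope h_ne γ y = interpolation γ x y := by
  refine le_antisymm (Finset.inf'_le _ hx) (Finset.le_inf' _ _ fun x' _ => ?_)
  refine affineMap_le_of_mem_triangleRegion (fun i => ?_) hy
  rw [interpolation_triangleVertex]
  exact hγ.le_interpolation_latticePoint x' _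

lemma IsHive.envelope_latticePoint (h_ne : 𝒯.Nonempty) {γ : ℤ × ℤ → ℝ} (hγ : IsHive γ)
    {v : ℤ × ℤ} (hv : v ∈ gridVertices 𝒯) : envelope h_ne γ (latticePoint v) = γ v := by
  simp only [gridVertices, Finset.mem_biUnion, Finset.mem_image, Finset.mem_univ, true_and] at hv
  obtain ⟨x, hx, i, rfl⟩ := hv
  rw [hγ.envelope_eq h_ne hx (latticePoint_triangleVertex_mem x i), interpolation_triangleVertex]

theorem exists_integral_concave_of_integral_boundary (h_ne : 𝒯.Nonempty) {f : ℝ × ℝ → ℝ}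
    (hf : ConcaveOn ℝ (latticeRegion 𝒯) f) (h_affine : ∀ x ∈ 𝒯, AffineOn f (triangleRegion x))
    (h_int : ∀ p i, IsBoundaryEdge 𝒯 p i →
      ∃ n : ℤ, f (latticePoint (p + direction i)) - f (latticePoint p) = n) :
    ∃ F : ℝ × ℝ → ℝ, ConcaveOn ℝ Set.univ F ∧ (∀ x ∈ 𝒯, AffineOn F (triangleRegion x)) ∧
      (∀ v ∈ gridVertices 𝒯, ∃ n : ℤ, F (latticePoint v) = n) ∧
      ∀ p i, IsBoundaryEdge 𝒯 p i →
        F (latticePoint (p + direction i)) - F (latticePoint p) =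
          f (latticePoint (p + direction i)) - f (latticePoint p) := by
  have h_const : IsConstantAlongBoundary (gridVertices 𝒯)
      fun v => ((f (latticePoint v) : ℝ) : UnitAddCircle) := by
    refine (forall_isBoundaryEdge_iff hf.1
      (P := fun a b => (f (latticePoint b) : UnitAddCircle) = f (latticePoint a))
      fun _ _ => Eq.symm).1 fun p i h_edge => ?_
    rw [← sub_eq_zero, ← AddCircle.coe_sub]
    exact coe_unitAddCircle_eq_zero_iff.2 (h_int p i h_edge)
  have h_vertices : (gridVertices 𝒯).Nonempty :=
    let ⟨_, hx⟩ := h_ne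
    ⟨_, triangleVertex_mem_gridVertices hx 0⟩
  obtain ⟨γ, hγ, hγ_int, hγ_eq⟩ :=
    (isDiscretelyConcaveOn_gridVertices hf h_affine).exists_integral_hive
      h_vertices (isDiscretelyConvex_gridVertices hf.1) h_const
  refine ⟨envelope h_ne γ, concaveOn_envelope h_ne γ,
    fun x' hx' => ⟨interpolation γ x', fun y hy => hγ.envelope_eq h_ne hx' hy⟩,
    fun v hv => hγ.envelope_latticePoint h_ne hv ▸ hγ_int v, fun p i h_edge => ?_⟩
  obtain ⟨⟨hp, hq⟩, -⟩ := (isBoundaryEdge_iff hf.1).1 h_edge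
  rw [hγ.envelope_latticePoint h_ne hp, hγ.envelope_latticePoint h_ne hq]
  exact (forall_isBoundaryEdge_iff hf.1
    (P := fun a b => γ b - γ a = f (latticePoint b) - f (latticePoint a))
    fun a b h => by linarith).2 hγ_eq p i h_edge

end LatticeGrids

section Chart

variable {G : ConvexGrid} {b : Pt} {𝒯 : Finset ((ℤ × ℤ) × Bool)}

/-- The affine chart of the plane with origin `b` that sends the standard basis to `ξ₁` and
`ξ₁ + ξ₂`, the two sides of an upward triangle that leave its base point. -/
def chart (b : Pt) : ℝ × ℝ ≃ᵃ[ℝ] Pt :=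
  (LinearEquiv.ofInjectiveEndo ((LinearMap.fst ℝ ℝ ℝ).smulRight (xiv 0) +
    (LinearMap.snd ℝ ℝ ℝ).smulRight (xiv 0 + xiv 1)) (by
      rw [← LinearMap.ker_eq_bot, LinearMap.ker_eq_bot']
      rintro ⟨s, t⟩ h
      have h_sqrt := Real.sqrt_ne_zero'.2 (zero_lt_three' ℝ)
      simp [xiv, Prod.ext_iff, h_sqrt] at h ⊢
      grind)).toAffineEquiv.trans
    (AffineEquiv.constVAdd ℝ Pt b)

lemma chart_apply (y : ℝ × ℝ) : chart b y = b + (y.1 • xiv 0 + y.2 • (xiv 0 + xiv 1)) := rfl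

/-- The little triangle of the plane whose coordinates in the chart at `b` are `x`. -/
def gridTriangle (b : Pt) (x : (ℤ × ℤ) × Bool) : GridTriangle :=
  ⟨chart b (latticePoint x.1), x.2⟩

/-- The edge of the plane that starts at the lattice point `p` and has direction `i`. -/
def gridEdge (b : Pt) (p : ℤ × ℤ) (i : Fin 3) : Ed :=
  (chart b (latticePoint p), chart b (latticePoint (p + direction i)))

lemma latticePoint_injective : Function.Injective latticePoint := fun v w h => by
  simpa [Prod.ext_iff] using h

lemma gridTriangle_injective : Function.Injective (gridTriangle b) := fun x x' h => by
  simp only [gridTriangle, GridTriangle.mk.injEq, EmbeddingLike.apply_eq_iff_eq,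
    latticePoint_injective.eq_iff] at h
  exact Prod.ext h.1 h.2

lemma gridEdge_inj {p q : ℤ × ℤ} {i j : Fin 3} :
    gridEdge b p i = gridEdge b q j ↔ p = q ∧ i = j := by
  have h_direction : Function.Injective direction := by decide
  simp only [gridEdge, Prod.mk.injEq, (chart b).injective.eq_iff, latticePoint_injective.eq_iff]
  exact and_congr_right fun h => by rw [h, add_right_inj, h_direction.eq_iff]

lemma xiv_two : xiv 2 = -xiv 0 - xiv 1 :=
  Prod.ext (by norm_num [xiv]) (by simp [xiv])

lemma gridTriangle_vertices (x : (ℤ × ℤ) × Bool) :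
    (gridTriangle b x).v0 = chart b (latticePoint (triangleVertex x 0)) ∧
    (gridTriangle b x).v1 = chart b (latticePoint (triangleVertex x (if x.2 then 1 else 2))) ∧
    (gridTriangle b x).v2 = chart b (latticePoint (triangleVertex x (if x.2 then 2 else 1))) := by
  obtain ⟨u, _ | _⟩ := x <;>
    simp [gridTriangle, GridTriangle.v0, GridTriangle.v1, GridTriangle.v2, chart_apply,
      triangleVertex, xiv_two] <;> constructor <;> module

lemma region_gridTriangle (x : (ℤ × ℤ) × Bool) :
    (gridTriangle b x).region = chart b '' triangleRegion x := by
  obtain ⟨h₀, h₁, h₂⟩ := gridTriangle_vertices (b := b) x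
  rw [GridTriangle.region, h₀, h₁, h₂, triangleRegion, ← AffineEquiv.coe_toAffineMap,
    AffineMap.image_convexHull]
  congr 1
  ext y
  obtain ⟨u, _ | _⟩ := x <;> simp [Fin.exists_fin_succ, eq_comm]
  grind

lemma mem_edgeFinset_gridTriangle {x : (ℤ × ℤ) × Bool} {e : Ed} :
    e ∈ (gridTriangle b x).edgeFinset ↔ ∃ i, e = gridEdge b (triangleVertex x i) i := by
  obtain ⟨h₀, h₁, h₂⟩ := gridTriangle_vertices (b := b) x
  obtain ⟨u, _ | _⟩ := x <;>
    simp [GridTriangle.edgeFinset, GridTriangle.e0, GridTriangle.e1, GridTriangle.e2, h₀, h₁, h₂,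
      gridEdge, Fin.exists_fin_succ, triangleVertex, direction, add_assoc,
      Prod.mk_zero_zero, or_comm, -map_add]

lemma gridEdge_mem_edgeFinset_iff {x : (ℤ × ℤ) × Bool} {p : ℤ × ℤ} {i : Fin 3} :
    gridEdge b p i ∈ (gridTriangle b x).edgeFinset ↔ x = triangleAt p i x.2 := by
  simp only [mem_edgeFinset_gridTriangle, gridEdge_inj]
  constructor
  · rintro ⟨_, rfl, rfl⟩
    exact (triangleAt_triangleVertex x i).symm
  · exact fun h => ⟨i, by rw [h, triangleVertex_triangleAt], rfl⟩

lemma exists_tris_eq_image (G : ConvexGrid) :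
    ∃ (b : Pt) (𝒯 : Finset ((ℤ × ℤ) × Bool)), G.tris = 𝒯.image (gridTriangle b) := by
  obtain ⟨T₀, hT₀⟩ := G.nonempty
  suffices (G.tris : Set GridTriangle) ⊆ gridTriangle T₀.base '' Set.univ by
    obtain ⟨𝒯, -, h𝒯⟩ := Finset.subset_set_image_iff.1 this
    exact ⟨T₀.base, 𝒯, h𝒯.symm⟩
  rintro ⟨c, up⟩ hT
  obtain ⟨m, n, h⟩ := G.aligned _ hT _ hT₀
  refine ⟨((m - n, n), up), trivial, ?_⟩
  rw [gridTriangle, ← sub_add_cancel c T₀.base, h, chart_apply]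
  congr 1
  simp
  module

lemma ConvexGrid.region_eq (hG : G.tris = 𝒯.image (gridTriangle b)) :
    G.region = chart b '' latticeRegion 𝒯 := by
  simp only [region, hG, Finset.set_biUnion_finset_image, region_gridTriangle, latticeRegion,
    Set.image_iUnion]

lemma ConvexGrid.mem_edges_iff (hG : G.tris = 𝒯.image (gridTriangle b)) {e : Ed} :
    e ∈ G.edges ↔ ∃ x ∈ 𝒯, ∃ i, e = gridEdge b (triangleVertex x i) i := by
  simp only [edges, hG, Finset.image_biUnion, Finset.mem_biUnion, mem_edgeFinset_gridTriangle]

lemma ConvexGrid.gridEdge_mem_boundary_iff (hG : G.tris = 𝒯.image (gridTriangle b)) {p : ℤ × ℤ}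
    {i : Fin 3} : gridEdge b p i ∈ G.boundary ↔ IsBoundaryEdge 𝒯 p i := by
  have h_filter : G.tris.filter (gridEdge b p i ∈ GridTriangle.edgeFinset ·) =
      (Finset.univ.filter (triangleAt p i · ∈ 𝒯)).image
        fun up => gridTriangle b (triangleAt p i up) := by
    ext T
    simp only [hG, Finset.mem_filter, Finset.mem_image, Finset.mem_univ, true_and]
    constructor
    · rintro ⟨⟨x, hx, rfl⟩, h_edge⟩
      have h := gridEdge_mem_edgeFinset_iff.1 h_edge
      exact ⟨x.2, h ▸ hx, h ▸ rfl⟩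
    · rintro ⟨up, h_up, rfl⟩
      exact ⟨⟨_, h_up, rfl⟩, gridEdge_mem_edgeFinset_iff.2 rfl⟩
  have h_injective : Function.Injective fun up => gridTriangle b (triangleAt p i up) :=
    gridTriangle_injective.comp fun _ _ h => congrArg Prod.snd h
  rw [boundary, Finset.mem_filter, h_filter, Finset.card_image_of_injective _ h_injective,
    Finset.card_eq_one_iff_existsUnique]
  simp only [Finset.mem_filter, Finset.mem_univ, true_and]
  refine and_iff_right_of_imp fun ⟨up, h_up, _⟩ => (mem_edges_iff hG).2
    ⟨_, h_up, i, by rw [triangleVertex_triangleAt]⟩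

lemma affineOn_comp {g : Pt → ℝ} {S : Set (ℝ × ℝ)} (h : AffineOn g (chart b '' S)) :
    AffineOn (g ∘ chart b) S :=
  let ⟨φ, hφ⟩ := h
  ⟨φ.comp (chart b), fun y hy => hφ _ ⟨y, hy, rfl⟩⟩

lemma affineOn_comp_symm {f : ℝ × ℝ → ℝ} {S : Set (ℝ × ℝ)} (h : AffineOn f S) :
    AffineOn (f ∘ (chart b).symm) (chart b '' S) := by
  obtain ⟨φ, hφ⟩ := h
  refine ⟨φ.comp (chart b).symm, ?_⟩
  rintro _ ⟨y, hy, rfl⟩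
  simpa using hφ y hy

lemma IsConcaveCocirculation.of_potential {g : Pt → ℝ} (hg : ConcaveOn ℝ G.region g)
    (h_affine : ∀ T ∈ G.tris, AffineOn g T.region) :
    IsConcaveCocirculation G fun e => g e.2 - g e.1 := by
  refine ⟨fun T _ => ?_, g, hg, h_affine, fun _ _ => rfl⟩
  simp only [GridTriangle.e0, GridTriangle.e1, GridTriangle.e2]
  ring

theorem ConvexGrid.exists_integral_potential (G : ConvexGrid) {g : Pt → ℝ}
    (hg : ConcaveOn ℝ G.region g) (h_affine : ∀ T ∈ G.tris, AffineOn g T.region)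
    (h_int : ∀ e ∈ G.boundary, ∃ n : ℤ, g e.2 - g e.1 = n) :
    ∃ F : Pt → ℝ, ConcaveOn ℝ G.region F ∧ (∀ T ∈ G.tris, AffineOn F T.region) ∧
      (∀ e ∈ G.edges, ∃ n : ℤ, F e.2 - F e.1 = n) ∧
      ∀ e ∈ G.boundary, F e.2 - F e.1 = g e.2 - g e.1 := by
  obtain ⟨b, 𝒯, hG⟩ := exists_tris_eq_image G
  have h_tris (P : GridTriangle → Prop) : (∀ T ∈ G.tris, P T) ↔ ∀ x ∈ 𝒯, P (gridTriangle b x) := by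
    rw [hG, Finset.forall_mem_image]
  have h_concave : ConcaveOn ℝ (latticeRegion 𝒯) (g ∘ chart b) := by
    have h := hg.comp_affineMap (chart b).toAffineMap
    rwa [region_eq hG, AffineEquiv.coe_toAffineMap, (chart b).injective.preimage_image] at h
  obtain ⟨F, hF, hF_affine, hF_int, hF_eq⟩ := exists_integral_concave_of_integral_boundary
    (by simpa [hG] using G.nonempty) h_concave
    (fun x hx => affineOn_comp (region_gridTriangle x ▸ (h_tris _).1 h_affine x hx))
    (fun p i h_edge => h_int _ ((gridEdge_mem_boundary_iff hG).2 h_edge))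
  have h_concave_symm : ConcaveOn ℝ Set.univ (F ∘ (chart b).symm) :=
    hF.comp_affineMap (chart b).symm.toAffineMap
  refine ⟨F ∘ (chart b).symm, h_concave_symm.subset (Set.subset_univ _) hg.1,
    (h_tris _).2 fun x hx => region_gridTriangle (b := b) x ▸ affineOn_comp_symm (hF_affine x hx),
    fun e he => ?_, fun e he => ?_⟩
  · obtain ⟨x, hx, i, rfl⟩ := (mem_edges_iff hG).1 he
    have h_end : triangleVertex x i + direction i ∈ gridVertices 𝒯 :=
      end_mem_gridVertices (up := x.2) (by rwa [triangleAt_triangleVertex])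
    obtain ⟨m, hm⟩ := hF_int _ (triangleVertex_mem_gridVertices hx i)
    obtain ⟨n, hn⟩ := hF_int _ h_end
    exact ⟨n - m, by simp [gridEdge, -map_add, hm, hn]⟩
  · obtain ⟨x, -, i, rfl⟩ := (mem_edges_iff hG).1 (Finset.filter_subset _ _ he)
    simpa [gridEdge, -map_add] using hF_eq _ i ((gridEdge_mem_boundary_iff hG).1 he)

end Chart

/-- Knutson–Tao integrality, Theorem 1.  If an integer-valued function
on the boundary edges of a convex grid extends to a concave cocirculation, then it
extends to an integer concave cocirculation. -/
theorem stmt0 (G : ConvexGrid) (h₀ : Ed → ℤ)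
    (hext : ∃ h : Ed → ℝ, IsConcaveCocirculation G h ∧
      ∀ e ∈ G.boundary, h e = (h₀ e : ℝ)) :
    ∃ h : Ed → ℝ, IsConcaveCocirculation G h ∧
      (∀ e ∈ G.edges, ∃ z : ℤ, h e = (z : ℝ)) ∧
      ∀ e ∈ G.boundary, h e = (h₀ e : ℝ) := by
  obtain ⟨h, ⟨-, g, hg, hg_affine, h_eq⟩, h_bd⟩ := hext
  have h_int : ∀ e ∈ G.boundary, g e.2 - g e.1 = h₀ e := fun e he => by
    rw [← h_eq e (Finset.filter_subset _ _ he), h_bd e he]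
  obtain ⟨F, hF, hF_affine, hF_int, hF_eq⟩ :=
    G.exists_integral_potential hg hg_affine fun e he => ⟨h₀ e, h_int e he⟩
  exact ⟨fun e => F e.2 - F e.1, .of_potential hF hF_affine, hF_int,
    fun e he => (hF_eq e he).trans (h_int e he)⟩

end
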